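/- arXiv:2405.19239 — 10 statements merged into one kernel-verified Lean document; each statement's English description precedes it below -/
import Mathlib

section
/- Let U ⊆ ℂ be a nonempty open connected set and let x, y : ℂ → ℂ be analytic on a neighbourhood of U (AnalyticOnNhd), such that for every t ∈ U, (deriv x t, deriv y t) ≠ (0,0). Then the Wronskian W(t) := deriv x t · deriv (deriv y) t − deriv (deriv x) t · deriv y t vanishes for all t ∈ U if and only if there exist a, b, c ∈ ℂ with (a,b) ≠ (0,0) such that a·x(t) + b·y(t) = c for all t ∈ U (i.e. the regular curve t ↦ (x(t), y(t)) is contained in a complex line). -/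
theorem curve_aux
    (U : Set ℂ) (hUo : IsOpen U) (hUc : IsPreconnected U)
    (x y : ℂ → ℂ) (hx : AnalyticOnNhd ℂ x U) (hy : AnalyticOnNhd ℂ y U)
    (t₀ : ℂ) (ht₀ : t₀ ∈ U) (h0 : deriv x t₀ ≠ 0)
    (hW : ∀ t ∈ U, deriv x t * deriv (deriv y) t - deriv (deriv x) t * deriv y t = 0) :
    ∃ k c : ℂ, ∀ t ∈ U, y t - k * x t = c := by
  have hx' := hx.deriv
  have hy' := hy.deriv
  have hev : ∀ᶠ t in nhds t₀, t ∈ U ∧ deriv x t ≠ 0 :=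
    (hUo.eventually_mem ht₀).and ((hx' t₀ ht₀).continuousAt.eventually_ne h0)
  obtain ⟨r, hr, hball⟩ := Metric.eventually_nhds_iff_ball.1 hev
  have hd : ∀ t ∈ Metric.ball t₀ r, HasDerivAt (fun s => deriv y s / deriv x s) 0 t := by
    intro t ht
    obtain ⟨htU, hne⟩ := hball t ht
    have h := (hy' t htU).differentiableAt.hasDerivAt.div
      (hx' t htU).differentiableAt.hasDerivAt hne
    refine HasDerivAt.congr_deriv h ?_
    rw [div_eq_zero_iff]
    left
    linear_combination hW t htU
  have hpc : IsPreconnected (Metric.ball t₀ r) := (convex_ball t₀ r).isPreconnected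
  have hk : ∀ t ∈ Metric.ball t₀ r,
      deriv y t / deriv x t = deriv y t₀ / deriv x t₀ := by
    intro t ht
    exact Metric.isOpen_ball.is_const_of_deriv_eq_zero hpc
      (fun s hs => (hd s hs).differentiableAt.differentiableWithinAt)
      (fun s hs => (hd s hs).deriv) ht (Metric.mem_ball_self hr)
  set k := deriv y t₀ / deriv x t₀ with hkdef
  have hE : Set.EqOn (deriv y) (fun t => k * deriv x t) U := by
    refine hy'.eqOn_of_preconnected_of_eventuallyEq
      (fun t ht => analyticAt_const.mul (hx' t ht)) hUc ht₀ ?_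
    filter_upwards [Metric.ball_mem_nhds t₀ hr] with t ht
    exact (div_eq_iff (hball t ht).2).1 (hk t ht)
  have hD : ∀ t ∈ U, HasDerivAt (fun s => y s - k * x s) 0 t := by
    intro t ht
    have h := (hy t ht).differentiableAt.hasDerivAt.sub
      ((hx t ht).differentiableAt.hasDerivAt.const_mul k)
    refine HasDerivAt.congr_deriv h ?_
    rw [hE ht, sub_self]
  refine ⟨k, y t₀ - k * x t₀, fun t ht => ?_⟩
  exact hUo.is_const_of_deriv_eq_zero hUc
    (fun s hs => (hD s hs).differentiableAt.differentiableWithinAt)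
    (fun s hs => (hD s hs).deriv) ht ht₀

/-- **Proposition 2.3(2).** A regular holomorphic plane curve `t ↦ (x t, y t)` on a
nonempty open connected set `U ⊆ ℂ` has identically vanishing Wronskian
`x'·y'' − x''·y'` if and only if it is contained in a complex line. -/
theorem regular_curve_line_iff_wronskian_zero
    (U : Set ℂ) (hUne : U.Nonempty) (hUo : IsOpen U) (hUc : IsPreconnected U)
    (x y : ℂ → ℂ) (hx : AnalyticOnNhd ℂ x U) (hy : AnalyticOnNhd ℂ y U)
    (hreg : ∀ t ∈ U, (deriv x t, deriv y t) ≠ (0, 0)) :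
    (∀ t ∈ U, deriv x t * deriv (deriv y) t - deriv (deriv x) t * deriv y t = 0) ↔
      ∃ a b c : ℂ, (a, b) ≠ (0, 0) ∧ ∀ t ∈ U, a * x t + b * y t = c := by
  constructor
  · intro hW
    obtain ⟨t₀, ht₀⟩ := hUne
    by_cases h0 : deriv x t₀ = 0
    · have h1 : deriv y t₀ ≠ 0 := fun h => hreg t₀ ht₀ (by rw [h0, h])
      obtain ⟨k, c, h⟩ := curve_aux U hUo hUc y x hy hx t₀ ht₀ h1
        (fun t ht => by linear_combination -(hW t ht))
      exact ⟨1, -k, c, by simp, fun t ht => by linear_combination h t ht⟩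
    · obtain ⟨k, c, h⟩ := curve_aux U hUo hUc x y hx hy t₀ ht₀ h0 hW
      exact ⟨-k, 1, c, by simp, fun t ht => by linear_combination h t ht⟩
  · rintro ⟨a, b, c, hab, h⟩
    have key : ∀ (f g : ℂ → ℂ) (d : ℂ), AnalyticOnNhd ℂ f U → AnalyticOnNhd ℂ g U →
        (∀ t ∈ U, a * f t + b * g t = d) → ∀ t ∈ U, a * deriv f t + b * deriv g t = 0 := by
      intro f g d hf hg hfg t ht
      have h1 := ((hf t ht).differentiableAt.hasDerivAt.const_mul a).add
        ((hg t ht).differentiableAt.hasDerivAt.const_mul b)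
      have h2 : HasDerivAt (fun _ : ℂ => d) 0 t := hasDerivAt_const t d
      refine h1.unique (h2.congr_of_eventuallyEq ?_)
      filter_upwards [hUo.mem_nhds ht] with s hs
      exact hfg s hs
    have h1 := key x y c hx hy h
    have h2 := key _ _ 0 hx.deriv hy.deriv h1
    intro t ht
    have e1 := h1 t ht
    have e2 := h2 t ht
    by_cases ha : a = 0
    · have hb : b ≠ 0 := fun hb => hab (by rw [ha, hb])
      apply (mul_eq_zero.1 (_ : b * _ = 0)).resolve_left hb
      linear_combination deriv x t * e2 - deriv (deriv x) t * e1
    · apply (mul_eq_zero.1 (_ : a * _ = 0)).resolve_left ha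
      linear_combination deriv (deriv y) t * e1 - deriv y t * e2
end

section
/- Let U ⊆ ℂ be a nonempty open connected set and let x, y : ℂ → ℂ be analytic on a neighbourhood of U, such that for every t ∈ U both (x'(t))² + (y'(t))² ≠ 0 and x'(t)·y''(t) − x''(t)·y'(t) ≠ 0 (where ' denotes deriv). Define v(t) := ((x'(t))² + (y'(t))²)·(x'(t)·y'''(t) − x'''(t)·y'(t)) + 3·(x'(t)·x''(t) + y'(t)·y''(t))·(x''(t)·y'(t) − x'(t)·y''(t)). Then v(t) = 0 for all t ∈ U if and only if there exist a, b, c ∈ ℂ with c ≠ 0 such that (x(t) − a)² + (y(t) − b)² = c² for all t ∈ U (i.e. the curve is contained in a complex circle). -/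
theorem aux_zero (U : Set ℂ) (hUo : IsOpen U) (f : ℂ → ℂ) (t d : ℂ) (ht : t ∈ U)
    (hf : ∀ s ∈ U, f s = 0) (hd : HasDerivAt f d t) : d = 0 := by
  have h : f =ᶠ[nhds t] fun _ => (0 : ℂ) := by
    filter_upwards [hUo.mem_nhds ht] with s hs using hf s hs
  exact hd.unique ((hasDerivAt_const t (0 : ℂ)).congr_of_eventuallyEq h)

theorem aux_const (U : Set ℂ) (hUo : IsOpen U) (hUc : IsPreconnected U) (f : ℂ → ℂ)
    (hd : ∀ t ∈ U, HasDerivAt f 0 t) : ∃ a, ∀ t ∈ U, f t = a :=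
  hUo.exists_is_const_of_deriv_eq_zero hUc
    (fun t ht => (hd t ht).differentiableAt.differentiableWithinAt)
    (fun t ht => (hd t ht).deriv)

/-- **Proposition 2.3(3).** A regular holomorphic plane curve on a nonempty open
connected set `U ⊆ ℂ` whose tangent is nowhere isotropic (`x'² + y'² ≠ 0`) and which
has no inflections (`x'y'' − x''y' ≠ 0`) has identically vanishing vertex function
`v = (x'² + y'²)(x'y''' − x'''y') + 3(x'x'' + y'y'')(x''y' − x'y'')`
if and only if it is contained in a complex circle `(x−a)² + (y−b)² = c²`, `c ≠ 0`. -/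
theorem regular_curve_circle_iff_vertex_function_zero
    (U : Set ℂ) (hUne : U.Nonempty) (hUo : IsOpen U) (hUc : IsPreconnected U)
    (x y : ℂ → ℂ) (hx : AnalyticOnNhd ℂ x U) (hy : AnalyticOnNhd ℂ y U)
    (hiso : ∀ t ∈ U, (deriv x t) ^ 2 + (deriv y t) ^ 2 ≠ 0)
    (hinfl : ∀ t ∈ U, deriv x t * deriv (deriv y) t - deriv (deriv x) t * deriv y t ≠ 0) :
    (∀ t ∈ U,
        ((deriv x t) ^ 2 + (deriv y t) ^ 2) *
            (deriv x t * deriv (deriv (deriv y)) t - deriv (deriv (deriv x)) t * deriv y t) +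
          3 * (deriv x t * deriv (deriv x) t + deriv y t * deriv (deriv y) t) *
            (deriv (deriv x) t * deriv y t - deriv x t * deriv (deriv y) t) = 0) ↔
      ∃ a b c : ℂ, c ≠ 0 ∧ ∀ t ∈ U, (x t - a) ^ 2 + (y t - b) ^ 2 = c ^ 2 := by
  have x1 : ∀ t ∈ U, HasDerivAt x (deriv x t) t :=
    fun t ht => (hx t ht).differentiableAt.hasDerivAt
  have x2 : ∀ t ∈ U, HasDerivAt (deriv x) (deriv (deriv x) t) t :=
    fun t ht => (hx.deriv t ht).differentiableAt.hasDerivAt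
  have x3 : ∀ t ∈ U, HasDerivAt (deriv (deriv x)) (deriv (deriv (deriv x)) t) t :=
    fun t ht => (hx.deriv.deriv t ht).differentiableAt.hasDerivAt
  have y1 : ∀ t ∈ U, HasDerivAt y (deriv y t) t :=
    fun t ht => (hy t ht).differentiableAt.hasDerivAt
  have y2 : ∀ t ∈ U, HasDerivAt (deriv y) (deriv (deriv y) t) t :=
    fun t ht => (hy.deriv t ht).differentiableAt.hasDerivAt
  have y3 : ∀ t ∈ U, HasDerivAt (deriv (deriv y)) (deriv (deriv (deriv y)) t) t :=
    fun t ht => (hy.deriv.deriv t ht).differentiableAt.hasDerivAt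
  generalize deriv (deriv (deriv x)) = X3 at *
  generalize deriv (deriv (deriv y)) = Y3 at *
  generalize deriv (deriv x) = X2 at *
  generalize deriv (deriv y) = Y2 at *
  generalize deriv x = X1 at *
  generalize deriv y = Y1 at *
  constructor
  · intro hv
    have hR : ∀ t ∈ U, HasDerivAt (fun t => (X1 t ^ 2 + Y1 t ^ 2) / (X1 t * Y2 t - X2 t * Y1 t))
        (((2 * X1 t * X2 t + 2 * Y1 t * Y2 t) * (X1 t * Y2 t - X2 t * Y1 t)
          - (X1 t ^ 2 + Y1 t ^ 2) * (X1 t * Y3 t - X3 t * Y1 t))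
          / (X1 t * Y2 t - X2 t * Y1 t) ^ 2) t := by
      intro t ht
      refine ((((x2 t ht).fun_pow 2).fun_add ((y2 t ht).fun_pow 2)).fun_div
        (((x2 t ht).fun_mul (y3 t ht)).fun_sub ((x3 t ht).fun_mul (y2 t ht))) (hinfl t ht)).congr_deriv ?_
      congr 1
      push_cast
      ring
    obtain ⟨a, ha⟩ := aux_const U hUo hUc
      (fun t => x t - Y1 t * ((X1 t ^ 2 + Y1 t ^ 2) / (X1 t * Y2 t - X2 t * Y1 t))) (by
        intro t ht
        refine ((x1 t ht).fun_sub ((y2 t ht).fun_mul (hR t ht))).congr_deriv ?_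
        have hW := hinfl t ht
        have h := hv t ht
        generalize hWe : X1 t * Y2 t - X2 t * Y1 t = W at hW ⊢
        field_simp
        rw [← hWe]
        linear_combination Y1 t * h)
    obtain ⟨b, hb⟩ := aux_const U hUo hUc
      (fun t => y t + X1 t * ((X1 t ^ 2 + Y1 t ^ 2) / (X1 t * Y2 t - X2 t * Y1 t))) (by
        intro t ht
        refine ((y1 t ht).fun_add ((x2 t ht).fun_mul (hR t ht))).congr_deriv ?_
        have hW := hinfl t ht
        have h := hv t ht
        generalize hWe : X1 t * Y2 t - X2 t * Y1 t = W at hW ⊢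
        field_simp
        rw [← hWe]
        linear_combination (-X1 t) * h)
    have hp : ∀ t ∈ U, x t - a = Y1 t * ((X1 t ^ 2 + Y1 t ^ 2) / (X1 t * Y2 t - X2 t * Y1 t)) :=
      fun t ht => by linear_combination ha t ht
    have hq : ∀ t ∈ U, y t - b = -(X1 t * ((X1 t ^ 2 + Y1 t ^ 2) / (X1 t * Y2 t - X2 t * Y1 t))) :=
      fun t ht => by linear_combination hb t ht
    obtain ⟨k, hk⟩ := aux_const U hUo hUc (fun t => (x t - a) ^ 2 + (y t - b) ^ 2) (by
        intro t ht
        refine ((((x1 t ht).sub_const a).fun_pow 2).fun_add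
          (((y1 t ht).sub_const b).fun_pow 2)).congr_deriv ?_
        rw [hp t ht, hq t ht]
        push_cast
        ring)
    obtain ⟨c, hc⟩ := IsAlgClosed.exists_pow_nat_eq k (n := 2) (by norm_num)
    refine ⟨a, b, c, ?_, fun t ht => by rw [hc]; exact hk t ht⟩
    rintro rfl
    obtain ⟨t, ht⟩ := hUne
    have h := hk t ht
    simp only [hp t ht, hq t ht] at h
    have hS := hiso t ht
    have h2 := div_ne_zero hS (hinfl t ht)
    apply mul_ne_zero hS (pow_ne_zero 2 h2)
    linear_combination h - hc
  · rintro ⟨a, b, c, -, h⟩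
    have h1 : ∀ t ∈ U, (x t - a) * X1 t + (y t - b) * Y1 t = 0 := by
      intro t ht
      have := aux_zero U hUo (fun t => (x t - a) ^ 2 + (y t - b) ^ 2 - c ^ 2) t _ ht
        (fun s hs => by simp only [h s hs, sub_self])
        (((((x1 t ht).sub_const a).fun_pow 2).fun_add
          (((y1 t ht).sub_const b).fun_pow 2)).sub_const _)
      push_cast at this
      linear_combination this / 2
    have h2 : ∀ t ∈ U, X1 t ^ 2 + Y1 t ^ 2 + (x t - a) * X2 t + (y t - b) * Y2 t = 0 := by
      intro t ht
      have := aux_zero U hUo _ t _ ht h1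
        ((((x1 t ht).sub_const a).fun_mul (x2 t ht)).fun_add
          (((y1 t ht).sub_const b).fun_mul (y2 t ht)))
      linear_combination this
    intro t ht
    have h3 := aux_zero U hUo _ t _ ht h2
      (((((x2 t ht).fun_pow 2).fun_add ((y2 t ht).fun_pow 2)).fun_add
        (((x1 t ht).sub_const a).fun_mul (x3 t ht))).fun_add
          (((y1 t ht).sub_const b).fun_mul (y3 t ht)))
    push_cast at h3
    have e1 := h1 t ht
    have e2 := h2 t ht
    have hP : (x t - a) * (X1 t * Y2 t - X2 t * Y1 t) = Y1 t * (X1 t ^ 2 + Y1 t ^ 2) := by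
      linear_combination Y2 t * e1 - Y1 t * e2
    have hQ : (y t - b) * (X1 t * Y2 t - X2 t * Y1 t) = -X1 t * (X1 t ^ 2 + Y1 t ^ 2) := by
      linear_combination X1 t * e2 - X2 t * e1
    linear_combination X3 t * hP + Y3 t * hQ - (X1 t * Y2 t - X2 t * Y1 t) * h3
end

section
/- Let m, n : ℕ with 1 ≤ m < n, and let y ∈ ℂ⟦T⟧ be a formal power series with ord y = n. Set x := T^m. Then ord((Dx)·(D²y) − (D²x)·(Dy)) = m + n − 3 (as elements of ℕ∞; note m + n − 3 ≥ 0 since m ≥ 1 and n ≥ 2). -/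
open PowerSeries

/-- The formal derivative on `ℂ⟦T⟧`. -/
noncomputable def D : PowerSeries ℂ → PowerSeries ℂ := fun f => PowerSeries.derivative ℂ f

/-- **Theorem 2.6(2).** For the parametrised curve `γ(t) = (t^m, y(t))` with
`1 ≤ m < n = ord y`, the order of the Wronskian `x'y'' − x''y'` (the number of
inflections concentrated at the singular point) is `m + n − 3`. -/
theorem order_inflection_series (m n : ℕ) (hm : 1 ≤ m) (hmn : m < n)
    (y : PowerSeries ℂ) (hy : y.order = n) :
    (D ((X : PowerSeries ℂ) ^ m) * D (D y) - D (D ((X : PowerSeries ℂ) ^ m)) * D y).order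
      = ((m + n - 3 : ℕ) : ℕ∞) := by
  obtain ⟨hn, hlt⟩ := order_eq_nat.1 hy
  obtain ⟨N, rfl⟩ : ∃ N, n = N + 2 := ⟨n - 2, by omega⟩
  have cD : ∀ (f : PowerSeries ℂ) (i : ℕ), coeff i (D f) = coeff (i + 1) f * (i + 1) :=
    fun f i => coeff_derivative f i
  rcases Nat.lt_or_ge m 2 with h1 | h2
  · obtain rfl : m = 1 := by omega
    have e1 : D ((X : PowerSeries ℂ) ^ 1) = 1 := by
      rw [pow_one]; exact derivative_X
    have e2 : D (1 : PowerSeries ℂ) = 0 := derivative_one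
    rw [e1, e2, one_mul, zero_mul, sub_zero]
    have : 1 + (N + 2) - 3 = N := by omega
    rw [this, order_eq_nat]
    constructor
    · rw [cD, cD]
      refine mul_ne_zero (mul_ne_zero hn ?_) ?_
      · exact_mod_cast (by omega : N + 1 + 1 ≠ 0)
      · exact_mod_cast (by omega : N + 1 ≠ 0)
    · intro i hi
      rw [cD, cD, hlt _ (by omega)]
      simp
  · obtain ⟨k, rfl⟩ : ∃ k, m = k + 2 := ⟨m - 2, by omega⟩
    have e1 : D ((X : PowerSeries ℂ) ^ (k + 2)) = C ((k : ℂ) + 2) * X ^ (k + 1) := by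
      ext i
      rw [cD, coeff_C_mul, coeff_X_pow, coeff_X_pow]
      by_cases h : i = k + 1
      · subst h
        simp
        ring
      · simp [h]
    have e2 : D (C ((k : ℂ) + 2) * (X : PowerSeries ℂ) ^ (k + 1))
        = C ((k : ℂ) + 2) * (C ((k : ℂ) + 1) * X ^ k) := by
      ext i
      rw [cD, coeff_C_mul, coeff_C_mul, coeff_C_mul, coeff_X_pow, coeff_X_pow]
      by_cases h : i = k
      · subst h
        simp
      · simp [h]
    rw [e1, e2]
    have e3 : C ((k : ℂ) + 2) * X ^ (k + 1) * D (D y)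
        - C ((k : ℂ) + 2) * (C ((k : ℂ) + 1) * X ^ k) * D y
        = X ^ k * (C ((k : ℂ) + 2) * (X * D (D y) - C ((k : ℂ) + 1) * D y)) := by ring
    have e4 : ∀ i : ℕ, coeff i (C ((k : ℂ) + 2) * (X * D (D y) - C ((k : ℂ) + 1) * D y))
        = ((k : ℂ) + 2) * (((i : ℂ) - (k + 1)) * (coeff (i + 1) y * (i + 1))) := by
      intro i
      rw [coeff_C_mul, map_sub, coeff_C_mul, cD]
      cases i with
      | zero => simp; ring
      | succ j =>
        rw [coeff_succ_X_mul, cD, cD]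
        push_cast
        ring
    have e5 : (C ((k : ℂ) + 2) * (X * D (D y) - C ((k : ℂ) + 1) * D y)).order
        = ((N + 1 : ℕ) : ℕ∞) := by
      rw [order_eq_nat]
      constructor
      · rw [e4]
        refine mul_ne_zero ?_ (mul_ne_zero ?_ (mul_ne_zero hn ?_))
        · exact_mod_cast (by omega : N + 1 + 1 ≠ 0)
        · rw [sub_ne_zero]
          have : N + 1 ≠ k + 1 := by omega
          exact_mod_cast this
        · exact_mod_cast (by omega : k + 2 ≠ 0)
      · intro i hi
        rw [e4, hlt _ (by omega)]
        simp
    rw [e3, order_mul, order_X_pow, e5]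
    have : k + 2 + (N + 2) - 3 = k + (N + 1) := by omega
    rw [this]
    push_cast
    rfl
end

section
/- Let m, n : ℕ with 1 ≤ m < n and n ≠ 2m, and let y ∈ ℂ⟦T⟧ be a formal power series with ord y = n. Set x := T^m and v := ((Dx)² + (Dy)²)·((Dx)·(D³y) − (D³x)·(Dy)) + 3·((Dx)·(D²x) + (Dy)·(D²y))·((D²x)·(Dy) − (Dx)·(D²y)). Then ord v = 3m + n − 6 (as elements of ℕ∞; note 3m + n − 6 ≥ 0 under the hypotheses). -/
open PowerSeries

/-- The vertex series of the parametrised curve `(x, y)`: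
`v = (x'² + y'²)(x'y''' − x'''y') + 3(x'x'' + y'y'')(x''y' − x'y'')`. -/
noncomputable def vser (x y : PowerSeries ℂ) : PowerSeries ℂ :=
  ((D x) ^ 2 + (D y) ^ 2) * (D x * D (D (D y)) - D (D (D x)) * D y) +
    3 * (D x * D (D x) + D y * D (D y)) * (D (D x) * D y - D x * D (D y))

theorem X_mul_D_X_pow (n : ℕ) :
    (X : PowerSeries ℂ) * D (X ^ n) = C (n : ℂ) * X ^ n := by
  unfold D
  rw [derivative_pow, derivative_X]
  rcases n with _ | n
  · simp
  · simp only [map_natCast, Nat.add_sub_cancel]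
    ring

theorem D_mul' (f g : PowerSeries ℂ) : D (f * g) = f * D g + g * D f := by
  unfold D
  simp

theorem euler_step (j n : ℕ) (E u : PowerSeries ℂ) (h : X ^ j * E = X ^ n * u) :
    X ^ (j + 1) * D E = X ^ n * (C ((n : ℂ) - j) * u + X * D u) := by
  have h1 := congrArg (fun f => X * D f) h
  simp only [D_mul'] at h1
  have e1 := X_mul_D_X_pow j
  have e2 := X_mul_D_X_pow n
  rw [map_sub]
  linear_combination h1 - E * e1 + u * e2 - C (j : ℂ) * h

theorem euler_three (n : ℕ) (y u : PowerSeries ℂ) (h : y = X ^ n * u) :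
    ∃ u1 u2 u3 : PowerSeries ℂ, X * D y = X ^ n * u1 ∧ X ^ 2 * D (D y) = X ^ n * u2 ∧
      X ^ 3 * D (D (D y)) = X ^ n * u3 ∧
      constantCoeff u1 = n * constantCoeff u ∧
      constantCoeff u2 = n * (n - 1) * constantCoeff u ∧
      constantCoeff u3 = n * (n - 1) * (n - 2) * constantCoeff u := by
  have h1 := euler_step 0 n y u (by simpa using h)
  have h2 := euler_step _ n _ _ h1
  have h3 := euler_step _ n _ _ h2
  refine ⟨_, _, _, by simpa using h1, h2, h3, ?_, ?_, ?_⟩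
  · simp
  · simp; ring
  · simp; ring

/-- **Theorem 2.6(3), generic case.** For the parametrised curve `γ(t) = (t^m, y(t))`
with `1 ≤ m < n = ord y` and `n ≠ 2m`, the order of the vertex series (the number of
vertices concentrated at the singular point) is `3m + n − 6`. -/
theorem order_vertex_series (m n : ℕ) (hm : 1 ≤ m) (hmn : m < n) (hn2m : n ≠ 2 * m)
    (y : PowerSeries ℂ) (hy : y.order = n) :
    (vser ((X : PowerSeries ℂ) ^ m) y).order = ((3 * m + n - 6 : ℕ) : ℕ∞) := by
  obtain ⟨k, rfl⟩ := Nat.exists_eq_add_of_lt hmn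
  obtain ⟨hc, hlt⟩ := order_eq_nat.mp hy
  obtain ⟨u, hu⟩ := X_pow_dvd_iff.mpr hlt
  have hu0 : constantCoeff u ≠ 0 := by
    rw [hu] at hc
    simpa [coeff_X_pow_mul'] using hc
  obtain ⟨a1, a2, a3, ha1, ha2, ha3, ca1, ca2, ca3⟩ := euler_three m (X ^ m) 1 (by simp)
  obtain ⟨u1, u2, u3, hu1, hu2, hu3, cu1, cu2, cu3⟩ := euler_three _ y u hu
  set w : PowerSeries ℂ := (a1 ^ 2 + X ^ (2 * (k + 1)) * u1 ^ 2) * (a1 * u3 - a3 * u1) +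
    3 * (a1 * a2 + X ^ (2 * (k + 1)) * (u1 * u2)) * (a2 * u1 - a1 * u2) with hw
  have key : X ^ 6 * vser (X ^ m) y = X ^ (3 * m + (m + k + 1)) * w := by
    have : X ^ 6 * vser (X ^ m) y =
      ((X * D (X ^ m)) ^ 2 + (X * D y) ^ 2) *
        ((X * D (X ^ m)) * (X ^ 3 * D (D (D y))) - (X ^ 3 * D (D (D (X ^ m)))) * (X * D y)) +
      3 * ((X * D (X ^ m)) * (X ^ 2 * D (D (X ^ m))) + (X * D y) * (X ^ 2 * D (D y))) *
        ((X ^ 2 * D (D (X ^ m))) * (X * D y) - (X * D (X ^ m)) * (X ^ 2 * D (D y))) := by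
      unfold vser
      ring
    rw [this, ha1, ha2, ha3, hu1, hu2, hu3, hw]
    ring
  have hw0 : constantCoeff w ≠ 0 := by
    have : constantCoeff w = (m : ℂ) ^ 3 * (m + k + 1 : ℕ) * (k + 1 : ℕ) *
        ((m + k + 1 : ℕ) - (2 * m : ℕ)) * constantCoeff u := by
      rw [hw]
      simp only [map_add, map_mul, map_sub, map_pow, map_ofNat, constantCoeff_X,
        ca1, ca2, ca3, cu1, cu2, cu3, map_one]
      rw [zero_pow (by omega)]
      push_cast
      ring
    rw [this]
    refine mul_ne_zero (mul_ne_zero (mul_ne_zero (mul_ne_zero (pow_ne_zero _ ?_) ?_) ?_) ?_) hu0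
    · exact Nat.cast_ne_zero.mpr (by omega)
    · exact Nat.cast_ne_zero.mpr (by omega)
    · exact Nat.cast_ne_zero.mpr (by omega)
    · exact sub_ne_zero.mpr (Nat.cast_injective.ne hn2m)
  have how : w.order = 0 := by
    by_contra hh
    exact hw0 (order_ne_zero_iff_constCoeff_eq_zero.mp hh)
  have ho := congrArg PowerSeries.order key
  rw [order_mul, order_mul, order_X_pow, order_X_pow, how, add_zero] at ho
  have h6 : 3 * m + (m + k + 1) = 6 + (3 * m + (m + k + 1) - 6) := by omega
  rw [h6, Nat.cast_add] at ho
  exact ENat.add_right_injective_of_ne_top (ENat.coe_ne_top 6) ho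
end

section
/- Let U ⊆ ℂ be open, let x, y : ℂ → ℂ be analytic on a neighbourhood of U, let K ⊆ U be compact and let ε > 0. Then there exist a₁, a₂, b₁, b₂ ∈ ℂ with ‖a₁‖, ‖a₂‖, ‖b₁‖, ‖b₂‖ < ε such that, setting X(t) := x(t) + a₁·t + a₂·t² and Y(t) := y(t) + b₁·t + b₂·t² and W(t) := X'(t)·Y''(t) − X''(t)·Y'(t) (with ' = deriv), every t ∈ K with W(t) = 0 satisfies (deriv W)(t) ≠ 0; that is, all inflections of the perturbed curve (X, Y) lying in K are simple. -/
/-- The Wronskian `X'Y'' − X''Y'` of a parametrised plane curve `(X, Y)`, whose zeros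
are the inflections of the curve. -/
noncomputable def wronskian2 (X Y : ℂ → ℂ) : ℂ → ℂ :=
  fun t => deriv X t * deriv (deriv Y) t - deriv (deriv X) t * deriv Y t

theorem aux_countable {s : Set ℂ} {T : Set ℂ} {f : ℂ → ℂ}
    (h : ∀ t ∈ s, ∀ᶠ u in nhds t, u ∈ T → f u = f t) (hT : T ⊆ s) : (f '' T).Countable := by
  obtain ⟨c, hcs, hc, hcov⟩ := TopologicalSpace.countable_cover_nhdsWithin
    (f := fun t => {u | u ∈ T → f u = f t}) (s := s)
    (fun t ht => mem_nhdsWithin_of_mem_nhds (h t ht))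
  refine (hc.image f).mono ?_
  rintro _ ⟨u, hu, rfl⟩
  have := hcov (hT hu)
  simp only [Set.mem_iUnion] at this
  obtain ⟨t, htc, ht⟩ := this
  exact ⟨t, htc, (ht hu).symm⟩

theorem aux_crit {U : Set ℂ} (hU : IsOpen U) {f : ℂ → ℂ} (hf : AnalyticOnNhd ℂ f U) :
    (f '' {t | t ∈ U ∧ deriv f t = 0}).Countable := by
  refine aux_countable (s := U) ?_ (fun t ht => ht.1)
  intro t ht
  rcases (hf t ht).deriv.eventually_eq_zero_or_eventually_ne_zero with h | h
  · obtain ⟨r, hr, hb⟩ := Metric.eventually_nhds_iff_ball.1 (h.and (hU.mem_nhds ht))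
    filter_upwards [Metric.ball_mem_nhds t hr] with u hu _
    refine Metric.isOpen_ball.is_const_of_deriv_eq_zero (𝕜 := ℂ) (convex_ball t r).isPreconnected
      (fun z hz => (hf z (hb z hz).2).differentiableAt.differentiableWithinAt)
      (fun z hz => (hb z hz).1) hu (Metric.mem_ball_self hr)
  · rw [eventually_nhdsWithin_iff] at h
    filter_upwards [h] with u hu hu2
    by_cases hut : u = t
    · rw [hut]
    · exact absurd hu2.2 (hu hut)

theorem aux_zeros {U : Set ℂ} {g : ℂ → ℂ} (hg : AnalyticOnNhd ℂ g U)
    (hg0 : ∀ t ∈ U, g t = 0 → deriv g t ≠ 0) : {t | t ∈ U ∧ g t = 0}.Countable := by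
  have := aux_countable (s := U) (T := {t | t ∈ U ∧ g t = 0}) (f := id) ?_ (fun t ht => ht.1)
  · simpa using this
  intro t ht
  rcases (hg t ht).eventually_eq_zero_or_eventually_ne_zero with h | h
  · exfalso
    refine hg0 t ht h.self_of_nhds ?_
    have h' : g =ᶠ[nhds t] fun _ => (0 : ℂ) := h
    rw [h'.deriv_eq]; simp
  · rw [eventually_nhdsWithin_iff] at h
    filter_upwards [h] with u hu hu2
    by_contra hut
    exact hu hut hu2.2

theorem aux_bad {U : Set ℂ} (hU : IsOpen U) {f g : ℂ → ℂ} (hf : AnalyticOnNhd ℂ f U)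
    (hg : AnalyticOnNhd ℂ g U) (hg0 : ∀ t ∈ U, g t = 0 → deriv g t ≠ 0) :
    {b : ℂ | ∃ t ∈ U, f t = b * g t ∧ deriv f t = b * deriv g t}.Countable := by
  have hV : IsOpen (U ∩ {t | g t ≠ 0}) :=
    hg.continuousOn.isOpen_inter_preimage hU isOpen_ne
  have h1 := aux_crit hV (f := f / g)
    ((hf.mono Set.inter_subset_left).div (hg.mono Set.inter_subset_left) (fun t ht => ht.2))
  have h2 := (aux_zeros hg hg0).image (fun t => deriv f t / deriv g t)
  refine (h1.union h2).mono ?_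
  rintro b ⟨t, ht, e1, e2⟩
  by_cases hgt : g t = 0
  · right
    refine ⟨t, ⟨ht, hgt⟩, ?_⟩
    have := hg0 t ht hgt
    simp only [e2]
    field_simp
  · left
    refine ⟨t, ⟨⟨ht, hgt⟩, ?_⟩, ?_⟩
    · rw [deriv_div (hf t ht).differentiableAt (hg t ht).differentiableAt hgt, e1, e2]
      ring
    · simp only [Pi.div_apply, e1]
      field_simp

theorem aux_small {s : Set ℂ} (hs : s.Countable) {ε : ℝ} (hε : 0 < ε) :
    ∃ b : ℂ, ‖b‖ < ε ∧ b ∉ s := by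
  obtain ⟨b, hb, hb'⟩ := (hs.dense_compl ℝ).exists_mem_open Metric.isOpen_ball
    ⟨(0 : ℂ), Metric.mem_ball_self hε⟩
  exact ⟨b, by simpa using hb', hb⟩

theorem aux_d {f : ℂ → ℂ} {t a b : ℂ} (hf : DifferentiableAt ℂ f t) :
    deriv (fun u => f u + a * u + b * u ^ 2) t = deriv f t + a + 2 * b * t := by
  have := ((hf.hasDerivAt.add ((hasDerivAt_id t).const_mul a)).add
    ((hasDerivAt_pow 2 t).const_mul b)).deriv
  refine Eq.trans this ?_
  simp
  ring

theorem aux_d2 {U : Set ℂ} (hU : IsOpen U) {f : ℂ → ℂ} (hf : AnalyticOnNhd ℂ f U) {t a b : ℂ}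
    (ht : t ∈ U) :
    deriv (deriv (fun u => f u + a * u + b * u ^ 2)) t = deriv (deriv f) t + 2 * b := by
  have h : deriv (fun u => f u + a * u + b * u ^ 2) =ᶠ[nhds t]
      fun u => deriv f u + (2 * b) * u + a := by
    filter_upwards [hU.mem_nhds ht] with u hu
    rw [aux_d (hf u hu).differentiableAt]; ring
  rw [h.deriv_eq]
  have := (((hf t ht).deriv.differentiableAt.hasDerivAt.add
    ((hasDerivAt_id t).const_mul (2 * b))).add_const a).deriv
  refine Eq.trans this ?_
  simp

/-- **Proposition 2.7 (inflection part).** Any holomorphic plane curve `(x, y)` admits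
arbitrarily small perturbations of the form `(x(t) + a₁t + a₂t², y(t) + b₁t + b₂t²)`
all of whose inflections in a given compact set are simple (simple zeros of the
Wronskian). -/
theorem exists_small_perturbation_simple_inflections
    (U : Set ℂ) (hUo : IsOpen U) (x y : ℂ → ℂ)
    (hx : AnalyticOnNhd ℂ x U) (hy : AnalyticOnNhd ℂ y U)
    (K : Set ℂ) (hK : IsCompact K) (hKU : K ⊆ U) (ε : ℝ) (hε : 0 < ε) :
    ∃ a₁ a₂ b₁ b₂ : ℂ, ‖a₁‖ < ε ∧ ‖a₂‖ < ε ∧ ‖b₁‖ < ε ∧ ‖b₂‖ < ε ∧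
      ∀ t ∈ K,
        wronskian2 (fun u => x u + a₁ * u + a₂ * u ^ 2)
            (fun u => y u + b₁ * u + b₂ * u ^ 2) t = 0 →
          deriv (wronskian2 (fun u => x u + a₁ * u + a₂ * u ^ 2)
            (fun u => y u + b₁ * u + b₂ * u ^ 2)) t ≠ 0 := by
  have hp := hx.deriv
  have hq := hy.deriv
  have hp' := hp.deriv
  have hq' := hq.deriv
  obtain ⟨c, hc, hcs⟩ := aux_small (aux_crit hUo hp') (by positivity : 0 < 2 * ε)
  set a : ℂ := -c / 2 with ha
  have hac : 2 * a = -c := by rw [ha]; ring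
  set g : ℂ → ℂ := fun u => deriv (deriv x) u + 2 * a with hgdef
  set f : ℂ → ℂ := fun u => (deriv x u + 2 * a * u) * deriv (deriv y) u - g u * deriv y u with hfdef
  have hg : AnalyticOnNhd ℂ g U := hp'.add analyticOnNhd_const
  have hf : AnalyticOnNhd ℂ f U :=
    ((hp.add (analyticOnNhd_const.mul analyticOnNhd_id)).mul hq').sub (hg.mul hq)
  have hg0 : ∀ t ∈ U, g t = 0 → deriv g t ≠ 0 := by
    intro t ht h0 h1
    refine hcs ⟨t, ⟨ht, ?_⟩, ?_⟩
    · simpa [hgdef] using h1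
    · have : deriv (deriv x) t + 2 * a = 0 := h0
      linear_combination this - hac
  obtain ⟨b, hb, hbs⟩ := aux_small (aux_bad hUo hf hg hg0) hε
  refine ⟨0, a, b, 0, by simpa, ?_, hb, by simpa, ?_⟩
  · rw [ha, norm_div, norm_neg, Complex.norm_ofNat]
    linarith
  intro t htK
  have ht := hKU htK
  have key : ∀ u ∈ U, wronskian2 (fun u => x u + 0 * u + a * u ^ 2)
      (fun u => y u + b * u + 0 * u ^ 2) u = f u - b * g u := by
    intro u hu
    unfold wronskian2
    rw [aux_d (hx u hu).differentiableAt, aux_d (hy u hu).differentiableAt,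
      aux_d2 hUo hx hu, aux_d2 hUo hy hu]
    simp only [hfdef, hgdef]
    ring
  have hev : wronskian2 (fun u => x u + 0 * u + a * u ^ 2)
      (fun u => y u + b * u + 0 * u ^ 2) =ᶠ[nhds t] fun u => f u - b * g u := by
    filter_upwards [hUo.mem_nhds ht] with u hu using key u hu
  have hd : deriv (fun u => f u - b * g u) t = deriv f t - b * deriv g t :=
    ((hf t ht).differentiableAt.hasDerivAt.sub
      ((hg t ht).differentiableAt.hasDerivAt.const_mul b)).deriv
  rw [hev.deriv_eq, key t ht, hd]
  intro h1 h2
  exact hbs ⟨t, ht, sub_eq_zero.1 h1, sub_eq_zero.1 h2⟩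
end

section
/- Let a, f ∈ R := MvPolynomial ℂ (Fin 2) with constant coefficient of a nonzero (a(0,0) ≠ 0). Then in A := MvPowerSeries ℂ (Fin 2) one has the equalities of ideals Ideal.span {ι(a·f), ι(i_{a·f})} = Ideal.span {ι(f), ι(i_f)} and Ideal.span {ι(a·f), ι(v_{a·f})} = Ideal.span {ι(f), ι(v_f)}, where ι : R → A is the canonical map. In particular m₀(a·f, i_{a·f}) = m₀(f, i_f) and m₀(a·f, v_{a·f}) = m₀(f, v_f). -/
open MvPolynomial

noncomputable section

/-- Partial derivative with respect to the first variable `X`. -/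
def dx (f : MvPolynomial (Fin 2) ℂ) : MvPolynomial (Fin 2) ℂ := pderiv 0 f

/-- Partial derivative with respect to the second variable `Y`. -/
def dy (f : MvPolynomial (Fin 2) ℂ) : MvPolynomial (Fin 2) ℂ := pderiv 1 f

/-- The inflection polynomial `i_f = f_y²·f_xx − 2·f_x·f_y·f_xy + f_x²·f_yy`. -/
def infl (f : MvPolynomial (Fin 2) ℂ) : MvPolynomial (Fin 2) ℂ :=
  (dy f) ^ 2 * dx (dx f) - 2 * dx f * dy f * dy (dx f) + (dx f) ^ 2 * dy (dy f)

/-- The vertex polynomial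
`v_f = (f_x² + f_y²)(f_x³ f_yyy − 3 f_x² f_y f_xyy + 3 f_x f_y² f_xxy − f_y³ f_xxx)
      − 3((f_x² − f_y²) f_xy − f_x f_y (f_xx − f_yy)) · i_f`. -/
def vert (f : MvPolynomial (Fin 2) ℂ) : MvPolynomial (Fin 2) ℂ :=
  ((dx f) ^ 2 + (dy f) ^ 2) *
      ((dx f) ^ 3 * dy (dy (dy f)) - 3 * (dx f) ^ 2 * dy f * dy (dy (dx f)) +
        3 * dx f * (dy f) ^ 2 * dy (dx (dx f)) - (dy f) ^ 3 * dx (dx (dx f))) -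
    3 * (((dx f) ^ 2 - (dy f) ^ 2) * dy (dx f) - dx f * dy f * (dx (dx f) - dy (dy f))) *
      infl f

/-- The canonical map from polynomials to formal power series in two variables. -/
def ι : MvPolynomial (Fin 2) ℂ →+* MvPowerSeries (Fin 2) ℂ :=
  MvPolynomial.coeToMvPowerSeries.ringHom

/-- The local intersection number at the origin of the curves `g = 0` and `h = 0`:
the `ℂ`-dimension of `ℂ⟦x,y⟧/⟨g,h⟩`. -/
def interMult (g h : MvPolynomial (Fin 2) ℂ) : ℕ :=
  Module.finrank ℂ (MvPowerSeries (Fin 2) ℂ ⧸ Ideal.span {ι g, ι h})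

end
theorem dx_mul (a f : MvPolynomial (Fin 2) ℂ) : dx (a * f) = a * dx f + dx a * f := by
  simp only [dx, Derivation.leibniz, smul_eq_mul]; ring

theorem dy_mul (a f : MvPolynomial (Fin 2) ℂ) : dy (a * f) = a * dy f + dy a * f := by
  simp only [dy, Derivation.leibniz, smul_eq_mul]; ring

theorem dx_add' (a f : MvPolynomial (Fin 2) ℂ) : dx (a + f) = dx a + dx f := by
  simp only [dx, map_add]

theorem dy_add' (a f : MvPolynomial (Fin 2) ℂ) : dy (a + f) = dy a + dy f := by
  simp only [dy, map_add]

theorem infl_mul_s8 (a f : MvPolynomial (Fin 2) ℂ) : f ∣ infl (a * f) - a ^ 3 * infl f := by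
  rw [← Ideal.mem_span_singleton, ← Ideal.Quotient.eq]
  have hf : Ideal.Quotient.mk (Ideal.span {f}) f = 0 :=
    Ideal.Quotient.eq_zero_iff_mem.2 (Ideal.mem_span_singleton_self f)
  simp only [infl, dx_mul, dy_mul, dx_add', dy_add', map_add, map_sub, map_mul, map_pow, hf,
    map_ofNat]
  ring

theorem vert_mul (a f : MvPolynomial (Fin 2) ℂ) : f ∣ vert (a * f) - a ^ 6 * vert f := by
  rw [← Ideal.mem_span_singleton, ← Ideal.Quotient.eq]
  have hf : Ideal.Quotient.mk (Ideal.span {f}) f = 0 :=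
    Ideal.Quotient.eq_zero_iff_mem.2 (Ideal.mem_span_singleton_self f)
  simp only [vert, infl, dx_mul, dy_mul, dx_add', dy_add', map_add, map_sub, map_mul, map_pow,
    hf, map_ofNat, mul_zero, add_zero]
  ring

theorem span_aux {S : Type*} [CommRing S] (u f g h c : S) (n : ℕ) (hu : IsUnit u)
    (e : g - u ^ n * h = f * c) : Ideal.span {u * f, g} = Ideal.span {f, h} := by
  obtain ⟨v, hv⟩ := hu.exists_right_inv
  have hvn : u ^ n * v ^ n = 1 := by rw [← mul_pow, hv, one_pow]
  apply le_antisymm <;> rw [Ideal.span_le, Set.insert_subset_iff, Set.singleton_subset_iff] <;>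
    simp only [SetLike.mem_coe, Ideal.mem_span_pair]
  · exact ⟨⟨u, 0, by ring⟩, ⟨c, u ^ n, by linear_combination -e⟩⟩
  · refine ⟨⟨v, 0, by linear_combination f * hv⟩, ⟨-v ^ n * c * v, v ^ n, ?_⟩⟩
    linear_combination v ^ n * e + h * hvn - v ^ n * c * f * hv

theorem isUnit_ι (a : MvPolynomial (Fin 2) ℂ) (ha : MvPolynomial.coeff 0 a ≠ 0) :
    IsUnit (ι a) := by
  rw [MvPowerSeries.isUnit_iff_constantCoeff, isUnit_iff_ne_zero,
    ← MvPowerSeries.coeff_zero_eq_constantCoeff_apply]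
  simpa [ι] using ha

/-- **Theorem 3.2(4).** The invariants `I_f` and `V_f` do not depend on the choice of
defining equation for the curve: multiplying `f` by a unit `a` (a polynomial with
nonzero constant term) changes neither the ideal `⟨f, i_f⟩` nor `⟨f, v_f⟩` in
`ℂ⟦x,y⟧`, and hence neither `I_f = m₀(f, i_f)` nor `V_f = m₀(f, v_f)`. -/
theorem inflection_vertex_ideal_unit_invariant
    (a f : MvPolynomial (Fin 2) ℂ) (ha : MvPolynomial.coeff 0 a ≠ 0) :
    Ideal.span {ι (a * f), ι (infl (a * f))} = Ideal.span {ι f, ι (infl f)} ∧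
    Ideal.span {ι (a * f), ι (vert (a * f))} = Ideal.span {ι f, ι (vert f)} ∧
    interMult (a * f) (infl (a * f)) = interMult f (infl f) ∧
    interMult (a * f) (vert (a * f)) = interMult f (vert f) := by
  have hu := isUnit_ι a ha
  have h1 : Ideal.span {ι (a * f), ι (infl (a * f))} = Ideal.span {ι f, ι (infl f)} := by
    obtain ⟨c, hc⟩ := infl_mul_s8 a f
    rw [map_mul]
    exact span_aux _ _ _ _ (ι c) 3 hu (by rw [← map_pow, ← map_mul, ← map_sub, hc, map_mul])
  have h2 : Ideal.span {ι (a * f), ι (vert (a * f))} = Ideal.span {ι f, ι (vert f)} := by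
    obtain ⟨c, hc⟩ := vert_mul a f
    rw [map_mul]
    exact span_aux _ _ _ _ (ι c) 6 hu (by rw [← map_pow, ← map_mul, ← map_sub, hc, map_mul])
  exact ⟨h1, h2, by rw [interMult, h1, interMult], by rw [interMult, h2, interMult]⟩
end

section
/- Let g, h ∈ R := MvPolynomial ℂ (Fin 2). Then there exists r ∈ R such that i_{g·h} = g³·i_h + h³·i_g + g·h·r. -/
open MvPolynomial

/-- **Key identity of Theorem 3.2(6).** For the inflection polynomial one has
`i_{g·h} = g³·i_h + h³·i_g + g·h·r` for some polynomial `r`. -/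
theorem infl_mul (g h : MvPolynomial (Fin 2) ℂ) :
    ∃ r : MvPolynomial (Fin 2) ℂ,
      infl (g * h) = g ^ 3 * infl h + h ^ 3 * infl g + g * h * r := by
  refine ⟨dx (dx g) * (2 * dy g * dy h * h + g * dy h ^ 2)
    + dx (dx h) * (dy g ^ 2 * h + 2 * dy g * dy h * g)
    - 2 * dy (dx g) * (h * (dx g * dy h + dy g * dx h) + g * dx h * dy h)
    - 2 * dy (dx h) * (dx g * dy g * h + g * (dx g * dy h + dy g * dx h))
    + dy (dy g) * (2 * dx g * dx h * h + g * dx h ^ 2)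
    + dy (dy h) * (dx g ^ 2 * h + 2 * dx g * dx h * g)
    - 2 * (dx g * dy h - dy g * dx h) ^ 2, ?_⟩
  have hx : ∀ a b, dx (a * b) = dx a * b + a * dx b := by
    intro a b
    simp only [dx, Derivation.leibniz, smul_eq_mul]
    ring
  have hy : ∀ a b, dy (a * b) = dy a * b + a * dy b := by
    intro a b
    simp only [dy, Derivation.leibniz, smul_eq_mul]
    ring
  have ax : ∀ a b, dx (a + b) = dx a + dx b := fun a b => map_add _ a b
  have ay : ∀ a b, dy (a + b) = dy a + dy b := fun a b => map_add _ a b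
  simp only [infl, hx, hy, ax, ay]
  ring
end

section
/- Let f ∈ R := MvPolynomial ℂ (Fin 2) and let x, y ∈ ℂ⟦T⟧ = PowerSeries ℂ, with φ := MvPolynomial.aeval ![x, y] : R → ℂ⟦T⟧. Assume φ f = 0. Then (Dx)³ · φ(i_f) = −(φ(f_y))³ · ((Dx)·(D²y) − (D²x)·(Dy)). Consequently, ord(φ(i_f)) + 3·ord(Dx) = 3·ord(φ(f_y)) + ord((Dx)·(D²y) − (D²x)·(Dy)) as an equality in ℕ∞. -/
open MvPolynomial

theorem dx_dy_comm (f : MvPolynomial (Fin 2) ℂ) : dx (dy f) = dy (dx f) := by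
  have h : ⁅(pderiv 0 : Derivation ℂ (MvPolynomial (Fin 2) ℂ) (MvPolynomial (Fin 2) ℂ)),
      (pderiv 1 : Derivation ℂ (MvPolynomial (Fin 2) ℂ) (MvPolynomial (Fin 2) ℂ))⁆ = 0 := by
    apply MvPolynomial.derivation_ext
    intro i
    fin_cases i <;> simp [Derivation.commutator_apply, pderiv_X]
  have h2 := congrArg (fun d => d f) h
  simp only [Derivation.commutator_apply, Derivation.zero_apply] at h2
  exact sub_eq_zero.mp h2

theorem D_aeval (f : MvPolynomial (Fin 2) ℂ) (x y : PowerSeries ℂ) :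
    D (aeval ![x, y] f) = aeval ![x, y] (dx f) * D x + aeval ![x, y] (dy f) * D y := by
  unfold D dx dy
  induction f using MvPolynomial.induction_on with
  | C a =>
    simp only [pderiv_C, map_zero, zero_mul, add_zero, algHom_C, Derivation.map_algebraMap]
  | add p q hp hq =>
    simp only [map_add, hp, hq]; ring
  | mul_X p i hp =>
    simp only [map_mul, Derivation.leibniz, hp, smul_eq_mul, map_add, aeval_X]
    fin_cases i <;> simp [pderiv_X] <;> ring

/-- **Key identity in Theorem 3.8(1).** If `γ = (x, y)` parametrises a branch of the
curve `f = 0` (i.e. `f(x(t), y(t)) = 0`), then `x'³ · (i_f ∘ γ) = −(f_y ∘ γ)³ · i_γ`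
where `i_γ = x'y'' − x''y'`; consequently
`ord(i_f ∘ γ) + 3·ord(x') = 3·ord(f_y ∘ γ) + ord(i_γ)`. -/
theorem inflection_pullback_identity
    (f : MvPolynomial (Fin 2) ℂ) (x y : PowerSeries ℂ)
    (hf : MvPolynomial.aeval ![x, y] f = 0) :
    (D x) ^ 3 * MvPolynomial.aeval ![x, y] (infl f)
        = -(MvPolynomial.aeval ![x, y] (dy f)) ^ 3 * (D x * D (D y) - D (D x) * D y) ∧
    (MvPolynomial.aeval ![x, y] (infl f)).order + 3 * (D x).order
        = 3 * (MvPolynomial.aeval ![x, y] (dy f)).order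
          + (D x * D (D y) - D (D x) * D y).order := by
  have E1 := D_aeval f x y
  have E2 := congrArg D E1
  have hadd : ∀ a b, D (a + b) = D a + D b := fun a b => map_add (PowerSeries.derivative ℂ) a b
  have hmul : ∀ a b, D (a * b) = a * D b + b * D a :=
    fun a b => (PowerSeries.derivative ℂ).leibniz a b
  have h0 : D 0 = 0 := map_zero (PowerSeries.derivative ℂ)
  rw [hf, h0] at E1 E2
  rw [h0, hadd, hmul, hmul, D_aeval, D_aeval, dx_dy_comm] at E2
  have key : (D x) ^ 3 * MvPolynomial.aeval ![x, y] (infl f)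
        = -(MvPolynomial.aeval ![x, y] (dy f)) ^ 3 * (D x * D (D y) - D (D x) * D y) := by
    simp only [infl, map_add, map_sub, map_mul, map_pow, map_ofNat]
    generalize aeval ![x, y] (dx (dx f)) = A at *
    generalize aeval ![x, y] (dy (dx f)) = B at *
    generalize aeval ![x, y] (dy (dy f)) = C at *
    generalize aeval ![x, y] (dx f) = a at *
    generalize aeval ![x, y] (dy f) = b at *
    generalize D (D x) = p2 at *
    generalize D (D y) = q2 at *
    generalize D x = p at *
    generalize D y = q at *
    linear_combination (-(p * b ^ 2)) * E2
      - (-2 * b * B * p ^ 2 + C * p * (a * p - b * q) - b ^ 2 * p2) * E1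
  refine ⟨key, ?_⟩
  have h := congrArg PowerSeries.order key
  rw [neg_mul, PowerSeries.order_neg, PowerSeries.order_mul, PowerSeries.order_mul,
    PowerSeries.order_pow, PowerSeries.order_pow, nsmul_eq_mul, nsmul_eq_mul] at h
  rw [add_comm]
  exact_mod_cast h
end

section
/- Let f ∈ R := MvPolynomial ℂ (Fin 2), let m, n : ℕ with 2 ≤ m < n, and let y ∈ ℂ⟦T⟧ with ord y = n, such that y is reduced with respect to m (there exists i with coeff_i(y) ≠ 0 and ¬ (m ∣ i)). Set x := T^m, φ := MvPolynomial.aeval ![x, y], and assume φ f = 0 and φ(f_y) ≠ 0. Let λ be the supremum over all (B,C) ∈ ℂ² of ord(T^(2m) + y² + 2·B·T^m + 2·C·y) (a finite natural number). Then ord(φ(v_f)) + 3·(m − 1) + 3 = ord(φ(i_f)) + 3·ord(φ(f_y)) + λ, an equality in ℕ∞ with all terms finite. -/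
open MvPolynomial

noncomputable section

/-- The Euler derivation `T d/dT` on power series. -/
def euler : Derivation ℂ (PowerSeries ℂ) (PowerSeries ℂ) :=
  (PowerSeries.X : PowerSeries ℂ) • PowerSeries.derivative ℂ

theorem euler_apply (p : PowerSeries ℂ) :
    euler p = PowerSeries.X * PowerSeries.derivative ℂ p := rfl

theorem euler_X_pow (k : ℕ) :
    euler ((PowerSeries.X : PowerSeries ℂ) ^ k) = (k : PowerSeries ℂ) * PowerSeries.X ^ k := by
  rw [euler_apply, PowerSeries.derivative_pow, PowerSeries.derivative_X]
  rcases k with _ | k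
  · simp
  · rw [Nat.add_sub_cancel]; ring

theorem euler_X_pow_mul (k : ℕ) (u : PowerSeries ℂ) :
    euler (PowerSeries.X ^ k * u) = PowerSeries.X ^ k * ((k : PowerSeries ℂ) * u + euler u) := by
  rw [Derivation.leibniz, euler_X_pow, smul_eq_mul, smul_eq_mul]
  ring

theorem constCoeff_euler (u : PowerSeries ℂ) : PowerSeries.constantCoeff (euler u) = 0 := by
  rw [euler_apply]; simp

theorem euler_mul (p q : PowerSeries ℂ) : euler (p * q) = euler p * q + p * euler q := by
  rw [Derivation.leibniz, smul_eq_mul, smul_eq_mul]; ring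

theorem euler_nat (k : ℕ) : euler (k : PowerSeries ℂ) = 0 := Derivation.map_natCast _ _

theorem euler_C (c : ℂ) : euler (PowerSeries.C c) = 0 := by
  rw [euler_apply]; simp

theorem chain_rule (x y : PowerSeries ℂ) (g : MvPolynomial (Fin 2) ℂ) :
    euler (MvPolynomial.aeval ![x, y] g) =
      MvPolynomial.aeval ![x, y] (dx g) * euler x + MvPolynomial.aeval ![x, y] (dy g) * euler y := by
  unfold dx dy
  induction g using MvPolynomial.induction_on with
  | C a =>
    simp only [MvPolynomial.algHom_C, MvPolynomial.pderiv_C, map_zero, zero_mul, add_zero]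
    exact Derivation.map_algebraMap _ _
  | add p q hp hq => simp only [map_add, hp, hq]; ring
  | mul_X p i hp =>
    rw [map_mul, euler_mul, hp]
    simp only [Derivation.leibniz, map_add, smul_eq_mul, map_mul, MvPolynomial.aeval_X,
      MvPolynomial.pderiv_X]
    fin_cases i <;> simp <;> ring

theorem dx_dy (g : MvPolynomial (Fin 2) ℂ) : dx (dy g) = dy (dx g) := by
  have h : ⁅(pderiv 0 : Derivation ℂ (MvPolynomial (Fin 2) ℂ) (MvPolynomial (Fin 2) ℂ)),
      (pderiv 1 : Derivation ℂ (MvPolynomial (Fin 2) ℂ) (MvPolynomial (Fin 2) ℂ))⁆ = 0 := by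
    apply MvPolynomial.derivation_ext
    intro i
    fin_cases i <;> simp [Derivation.commutator_apply, MvPolynomial.pderiv_X]
  have := congrArg (fun D => D g) h
  simp only [Derivation.commutator_apply, Derivation.coe_zero, Pi.zero_apply] at this
  exact sub_eq_zero.mp this

theorem field_id {K : Type*} [Field K] (a b p q r s0 s1 s2 s3 x1 x2 x3 y1 y2 y3 : K)
    (hx : x1 ≠ 0) (E1 : a * x1 + b * y1 = 0)
    (E2 : p * x1^2 + 2*q*x1*y1 + r*y1^2 + a*x2 + b*y2 = 0)
    (E3 : s0*x1^3+3*s1*x1^2*y1+3*s2*x1*y1^2+s3*y1^3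
      + 3*(p*x1*x2+q*(x1*y2+x2*y1)+r*y1*y2)+a*x3+b*y3=0) :
    (b^2*p - 2*a*b*q + a^2*r) * x1^3 = -b^3*(x1*y2-x2*y1) ∧
    ((a^2+b^2)*(a^3*s3-3*a^2*b*s2+3*a*b^2*s1-b^3*s0)
        - 3*((a^2-b^2)*q-a*b*(p-r))*(b^2*p - 2*a*b*q + a^2*r)) * x1^6
      = b^6*((x1^2+y1^2)*(x1*y3-x3*y1) - 3*(x1*x2+y1*y2)*(x1*y2-x2*y1)) := by
  have ha : a = -b*y1/x1 := by field_simp; linear_combination E1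
  have hp : p = -(2*q*x1*y1 + r*y1^2 + a*x2 + b*y2)/x1^2 := by
    field_simp; linear_combination E2
  have hs : s0 = -(3*s1*x1^2*y1+3*s2*x1*y1^2+s3*y1^3
      + 3*(p*x1*x2+q*(x1*y2+x2*y1)+r*y1*y2)+a*x3+b*y3)/x1^3 := by
    field_simp; linear_combination E3
  clear E1 E2 E3
  subst hs hp ha
  constructor
  · field_simp; ring
  · field_simp; ring

theorem domain_id {R : Type*} [CommRing R] [IsDomain R]
    (a b p q r s0 s1 s2 s3 x1 x2 x3 y1 y2 y3 : R)
    (hx : x1 ≠ 0) (E1 : a * x1 + b * y1 = 0)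
    (E2 : p * x1^2 + 2*q*x1*y1 + r*y1^2 + a*x2 + b*y2 = 0)
    (E3 : s0*x1^3+3*s1*x1^2*y1+3*s2*x1*y1^2+s3*y1^3
      + 3*(p*x1*x2+q*(x1*y2+x2*y1)+r*y1*y2)+a*x3+b*y3=0) :
    (b^2*p - 2*a*b*q + a^2*r) * x1^3 = -b^3*(x1*y2-x2*y1) ∧
    ((a^2+b^2)*(a^3*s3-3*a^2*b*s2+3*a*b^2*s1-b^3*s0)
        - 3*((a^2-b^2)*q-a*b*(p-r))*(b^2*p - 2*a*b*q + a^2*r)) * x1^6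
      = b^6*((x1^2+y1^2)*(x1*y3-x3*y1) - 3*(x1*x2+y1*y2)*(x1*y2-x2*y1)) := by
  obtain ⟨j, inj⟩ : ∃ j : R →+* FractionRing R, Function.Injective j :=
    ⟨algebraMap R _, IsFractionRing.injective R (FractionRing R)⟩
  have := field_id (K := FractionRing R) (j a) (j b) (j p) (j q) (j r) (j s0) (j s1)
    (j s2) (j s3) (j x1) (j x2) (j x3) (j y1) (j y2) (j y3)
    (by rwa [Ne, map_eq_zero_iff _ inj])
    (by simpa only [map_add, map_mul, map_zero] using congrArg j E1)
    (by simpa only [map_add, map_mul, map_pow, map_ofNat, map_zero] using congrArg j E2)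
    (by simpa only [map_add, map_mul, map_pow, map_ofNat, map_zero] using congrArg j E3)
  refine ⟨inj ?_, inj ?_⟩
  · simpa only [map_add, map_sub, map_neg, map_mul, map_pow, map_ofNat] using this.1
  · simpa only [map_add, map_sub, map_neg, map_mul, map_pow, map_ofNat] using this.2

/-- `i_f` and `v_f` along the parametrisation. -/
theorem param_id (x y : PowerSeries ℂ) (f : MvPolynomial (Fin 2) ℂ)
    (hf : MvPolynomial.aeval ![x, y] f = 0) (hx : euler x ≠ 0) :
    MvPolynomial.aeval ![x, y] (infl f) * euler x ^ 3 =
      -(MvPolynomial.aeval ![x, y] (dy f)) ^ 3 *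
        (euler x * euler (euler y) - euler (euler x) * euler y) ∧
    MvPolynomial.aeval ![x, y] (vert f) * euler x ^ 6 =
      (MvPolynomial.aeval ![x, y] (dy f)) ^ 6 *
        ((euler x ^ 2 + euler y ^ 2) *
          (euler x * euler (euler (euler y)) - euler (euler (euler x)) * euler y)
        - 3 * (euler x * euler (euler x) + euler y * euler (euler y)) *
          (euler x * euler (euler y) - euler (euler x) * euler y)) := by
  have E1 := congrArg euler hf
  rw [chain_rule, map_zero] at E1
  have E2 := congrArg euler E1
  simp only [map_add, euler_mul, chain_rule, map_zero, dx_dy] at E2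
  have E3 := congrArg euler E2
  simp only [map_add, euler_mul, chain_rule, map_zero, dx_dy] at E3
  have key := domain_id _ _ (aeval ![x, y] (dx (dx f))) (aeval ![x, y] (dy (dx f)))
    (aeval ![x, y] (dy (dy f))) (aeval ![x, y] (dx (dx (dx f)))) (aeval ![x, y] (dy (dx (dx f))))
    (aeval ![x, y] (dy (dy (dx f)))) (aeval ![x, y] (dy (dy (dy f))))
    _ (euler (euler x)) (euler (euler (euler x))) _ (euler (euler y)) (euler (euler (euler y)))
    hx E1 (by linear_combination E2) (by linear_combination E3)
  constructor
  · rw [← key.1]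
    simp only [infl, map_add, map_sub, map_mul, map_pow, map_ofNat]
  · rw [← key.2]
    simp only [vert, infl, map_add, map_sub, map_mul, map_pow, map_ofNat]

theorem order_X_pow_mul (k : ℕ) (u : PowerSeries ℂ) (hu : PowerSeries.constantCoeff u ≠ 0) :
    (PowerSeries.X ^ k * u).order = (k : ℕ∞) := by
  rw [PowerSeries.order_mul, PowerSeries.order_X_pow]
  have : u.order = 0 := by
    by_contra h
    exact hu (PowerSeries.order_ne_zero_iff_constCoeff_eq_zero.mp h)
  rw [this, add_zero]

theorem exists_of_order (k : ℕ) (p : PowerSeries ℂ) (hp : p.order = k) :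
    ∃ u, p = PowerSeries.X ^ k * u ∧ PowerSeries.constantCoeff u = PowerSeries.coeff k p ∧
      PowerSeries.constantCoeff u ≠ 0 := by
  have hk : p.order.toNat = k := by rw [hp]; rfl
  have h0 : p ≠ 0 := by
    rintro rfl
    simp at hp
  have h1 := PowerSeries.X_pow_order_mul_divXPowOrder (f := p)
  have h2 := PowerSeries.constantCoeff_divXPowOrder (f := p)
  have h3 := PowerSeries.coeff_order h0
  rw [hk] at h1 h2 h3
  exact ⟨_, h1.symm, h2, by rw [h2]; exact h3⟩

theorem order_W (m n : ℕ) (hm : 0 < m) (hmn : m < n) (y : PowerSeries ℂ) (hy : y.order = n) :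
    (euler (PowerSeries.X ^ m) * euler (euler y) -
      euler (euler (PowerSeries.X ^ m)) * euler y).order = ((m + n : ℕ) : ℕ∞) := by
  obtain ⟨u, rfl, -, hu⟩ := exists_of_order n y hy
  simp only [euler_X_pow_mul]
  simp only [euler_X_pow, euler_mul, euler_nat]
  rw [← order_X_pow_mul (m + n) ((m : PowerSeries ℂ) * ((n : PowerSeries ℂ) * (n * u + euler u)
    + euler (n * u + euler u)) - (m : PowerSeries ℂ) ^ 2 * (n * u + euler u))]
  · congr 1
    simp only [map_add, euler_mul, euler_nat]
    ring
  · simp only [map_sub, map_mul, map_add, constCoeff_euler, map_natCast, map_pow]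
    have h1 : (m : ℂ) ≠ 0 := by exact_mod_cast hm.ne'
    have h2 : (n : ℂ) ≠ 0 := by exact_mod_cast (by omega : n ≠ 0)
    have h3 : (n : ℂ) - m ≠ 0 := by rw [sub_ne_zero]; exact_mod_cast hmn.ne'
    have : (m : ℂ) * n * (n - m) * PowerSeries.constantCoeff u ≠ 0 := by positivity
    convert this using 1
    ring

theorem order_V (m n L : ℕ) (hm : 0 < m) (hmn : m < n) (hmL : m < L) (hnL : L ≠ n)
    (y : PowerSeries ℂ) (c : ℂ) (hy : y.order = n)
    (hg : ((PowerSeries.X : PowerSeries ℂ) ^ (2 * m) + y ^ 2 + 2 * PowerSeries.C c * y).order = (L : ℕ∞)) :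
    ((euler (PowerSeries.X ^ m) ^ 2 + euler y ^ 2) *
          (euler (PowerSeries.X ^ m) * euler (euler (euler y))
            - euler (euler (euler (PowerSeries.X ^ m))) * euler y)
        - 3 * (euler (PowerSeries.X ^ m) * euler (euler (PowerSeries.X ^ m))
            + euler y * euler (euler y)) *
          (euler (PowerSeries.X ^ m) * euler (euler y)
            - euler (euler (PowerSeries.X ^ m)) * euler y)).order = ((m + n + L : ℕ) : ℕ∞) := by
  set g := (PowerSeries.X : PowerSeries ℂ) ^ (2 * m) + y ^ 2 + 2 * PowerSeries.C c * y with hgdef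
  have hg0 : g = PowerSeries.X ^ m * PowerSeries.X ^ m + y * y + 2 * PowerSeries.C c * y := by
    rw [hgdef]; ring
  have e2 : euler (2 : PowerSeries ℂ) = 0 := euler_nat 2
  have g1 := congrArg euler hg0
  simp only [map_add, euler_mul, euler_C, e2] at g1
  have g2 := congrArg euler g1
  simp only [map_add, euler_mul, euler_C, e2, map_zero] at g2
  have g3 := congrArg euler g2
  simp only [map_add, euler_mul, euler_C, e2, map_zero] at g3
  have two : (2 : PowerSeries ℂ).order = 0 := by
    have h := order_X_pow_mul 0 (2 : PowerSeries ℂ) (by rw [map_ofNat]; norm_num)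
    simpa using h
  rw [← zero_add (PowerSeries.order _), ← two, ← PowerSeries.order_mul]
  obtain ⟨u, hyu, -, hu⟩ := exists_of_order n y hy
  obtain ⟨w, hgw, -, hw⟩ := exists_of_order L g hg
  set x : PowerSeries ℂ := PowerSeries.X ^ m with hxdef
  trans (-(euler x * (euler (euler y) * euler (euler (euler g))
      - euler (euler (euler y)) * euler (euler g))
      - euler y * (euler (euler x) * euler (euler (euler g))
      - euler (euler (euler x)) * euler (euler g))
      + euler g * (euler (euler x) * euler (euler (euler y))
      - euler (euler (euler x)) * euler (euler y)))).order
  · congr 1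
    rw [g3, g2, g1]
    ring
  clear g1 g2 g3 two
  clear_value g
  clear hg0 hgdef hg hy
  subst hyu hgw
  rw [hxdef]
  simp only [euler_X_pow_mul]
  simp only [euler_X_pow, euler_mul, euler_nat, zero_mul, zero_add]
  set u1 := (n : PowerSeries ℂ) * u + euler u with hu1
  set u2 := (n : PowerSeries ℂ) * u1 + euler u1 with hu2
  set u3 := (n : PowerSeries ℂ) * u2 + euler u2 with hu3
  set w1 := (L : PowerSeries ℂ) * w + euler w with hw1
  set w2 := (L : PowerSeries ℂ) * w1 + euler w1 with hw2
  set w3 := (L : PowerSeries ℂ) * w2 + euler w2 with hw3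
  rw [← order_X_pow_mul (m + n + L) (-((m : PowerSeries ℂ) * (u2 * w3 - u3 * w2)
    - u1 * (m ^ 2 * w3 - m ^ 3 * w2) + w1 * (m ^ 2 * u3 - m ^ 3 * u2)))]
  · congr 1
    ring
  · have c1 : PowerSeries.constantCoeff u1 = n * PowerSeries.constantCoeff u := by
      rw [hu1]; simp [constCoeff_euler]
    have c2 : PowerSeries.constantCoeff u2 = n ^ 2 * PowerSeries.constantCoeff u := by
      rw [hu2]; simp [constCoeff_euler, c1]; ring
    have c3 : PowerSeries.constantCoeff u3 = n ^ 3 * PowerSeries.constantCoeff u := by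
      rw [hu3]; simp [constCoeff_euler, c2]; ring
    have d1 : PowerSeries.constantCoeff w1 = L * PowerSeries.constantCoeff w := by
      rw [hw1]; simp [constCoeff_euler]
    have d2 : PowerSeries.constantCoeff w2 = L ^ 2 * PowerSeries.constantCoeff w := by
      rw [hw2]; simp [constCoeff_euler, d1]; ring
    have d3 : PowerSeries.constantCoeff w3 = L ^ 3 * PowerSeries.constantCoeff w := by
      rw [hw3]; simp [constCoeff_euler, d2]; ring
    simp only [map_neg, map_sub, map_mul, map_add, map_natCast, map_pow, c1, c2, c3, d1, d2, d3]
    have h1 : (m : ℂ) ≠ 0 := by exact_mod_cast hm.ne'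
    have h2 : (n : ℂ) ≠ 0 := by exact_mod_cast (by omega : n ≠ 0)
    have h2' : (L : ℂ) ≠ 0 := by exact_mod_cast (by omega : L ≠ 0)
    have h3 : (n : ℂ) - m ≠ 0 := by rw [sub_ne_zero]; exact_mod_cast hmn.ne'
    have h4 : (L : ℂ) - m ≠ 0 := by rw [sub_ne_zero]; exact_mod_cast hmL.ne'
    have h5 : (L : ℂ) - n ≠ 0 := by rw [sub_ne_zero]; exact_mod_cast hnL
    have : -((m : ℂ) * n * L * (n - m) * (L - m) * (L - n) * PowerSeries.constantCoeff u
      * PowerSeries.constantCoeff w) ≠ 0 := neg_ne_zero.mpr (by positivity)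
    convert this using 1
    ring

/-- A branch contained in a circle is not reduced. -/
theorem circle_ne_zero (m : ℕ) (hm : 0 < m) (y : PowerSeries ℂ) (c : ℂ) (hc : c ≠ 0)
    (hy0 : PowerSeries.coeff 0 y = 0)
    (hred : ∃ i, (PowerSeries.coeff i) y ≠ 0 ∧ ¬ m ∣ i) :
    (PowerSeries.X : PowerSeries ℂ) ^ (2 * m) + y ^ 2 + 2 * PowerSeries.C c * y ≠ 0 := by
  intro h
  obtain ⟨i, hi, hmi⟩ := hred
  apply hi
  clear hi
  induction i using Nat.strong_induction_on with
  | _ i ih =>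
    have h2 := congrArg (PowerSeries.coeff i) h
    have h3 : (2 : PowerSeries ℂ) * PowerSeries.C c = PowerSeries.C (2 * c) := by
      simp only [map_mul, map_ofNat, implies_true]
    rw [h3, map_add, map_add, PowerSeries.coeff_C_mul, PowerSeries.coeff_X_pow, map_zero,
      if_neg (by rintro rfl; exact hmi (dvd_mul_left _ _)), pow_two, PowerSeries.coeff_mul,
      Finset.sum_eq_zero] at h2
    · simpa [hc] using h2
    · rintro ⟨j, k⟩ hjk
      rw [Finset.HasAntidiagonal.mem_antidiagonal] at hjk
      simp only at hjk ⊢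
      by_cases hj : m ∣ j
      · have hk : ¬ m ∣ k := fun hk => hmi (hjk ▸ dvd_add hj hk)
        rcases Nat.eq_zero_or_pos j with rfl | hj0
        · rw [hy0, zero_mul]
        · rw [ih k (by omega) hk, mul_zero]
      · rcases Nat.eq_zero_or_pos k with rfl | hk0
        · rw [hy0, mul_zero]
        · rw [ih j (by omega) hj, zero_mul]

theorem exists_contact (m n : ℕ) (hm : 0 < m) (hmn : m < n) (y : PowerSeries ℂ)
    (hy : y.order = n) (hred : ∃ i, (PowerSeries.coeff i) y ≠ 0 ∧ ¬ m ∣ i) :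
    ∃ (c : ℂ) (L : ℕ), m < L ∧ L ≠ n ∧
      ((PowerSeries.X : PowerSeries ℂ) ^ (2 * m) + y ^ 2 + 2 * PowerSeries.C c * y).order = (L : ℕ∞) ∧
      ∀ b d : ℂ, ((PowerSeries.X : PowerSeries ℂ) ^ (2 * m) + y ^ 2 +
        2 * PowerSeries.C b * (PowerSeries.X : PowerSeries ℂ) ^ m +
        2 * PowerSeries.C d * y).order ≤ (L : ℕ∞) := by
  have h0 : ∀ k < n, PowerSeries.coeff k y = 0 := fun k hk =>
    PowerSeries.coeff_of_lt_order k (by rw [hy]; exact_mod_cast hk)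
  have hn : PowerSeries.coeff n y ≠ 0 := (PowerSeries.order_eq_nat.mp hy).1
  have hsq : ∀ k < 2 * n, PowerSeries.coeff k (y ^ 2) = 0 := fun k hk =>
    PowerSeries.coeff_of_lt_order k (by
      rw [PowerSeries.order_pow, hy]
      simp only [nsmul_eq_mul]; exact_mod_cast hk)
  have hco : ∀ (b d : ℂ) (k : ℕ), k < 2 * n → PowerSeries.coeff k
      ((PowerSeries.X : PowerSeries ℂ) ^ (2 * m) + y ^ 2 +
        2 * PowerSeries.C b * (PowerSeries.X : PowerSeries ℂ) ^ m +
        2 * PowerSeries.C d * y) = (if k = 2 * m then 1 else 0) + 2 * b * (if k = m then 1 else 0)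
        + 2 * d * PowerSeries.coeff k y := by
    intro b d k hk
    have h3 : ∀ c, (2 : PowerSeries ℂ) * PowerSeries.C c = PowerSeries.C (2 * c) := by
      simp only [map_mul, map_ofNat, implies_true]
    simp only [h3, map_add, PowerSeries.coeff_C_mul, PowerSeries.coeff_X_pow, hsq k hk, add_zero]
  have hco0 : ∀ (d : ℂ) (k : ℕ), k < 2 * n → PowerSeries.coeff k
      ((PowerSeries.X : PowerSeries ℂ) ^ (2 * m) + y ^ 2 + 2 * PowerSeries.C d * y)
        = (if k = 2 * m then 1 else 0) + 2 * d * PowerSeries.coeff k y := by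
    intro d k hk
    simpa using hco 0 d k hk
  have hB : ∀ (b d : ℂ) (L : ℕ), b ≠ 0 → m < L → ((PowerSeries.X : PowerSeries ℂ) ^ (2 * m) + y ^ 2 +
        2 * PowerSeries.C b * (PowerSeries.X : PowerSeries ℂ) ^ m +
        2 * PowerSeries.C d * y).order ≤ (L : ℕ∞) := by
    intro b d L hb hL
    refine (PowerSeries.order_le m ?_).trans (by exact_mod_cast hL.le)
    rw [hco b d m (by omega), h0 m hmn, if_neg (by omega)]
    simpa using hb
  by_cases h2 : n = 2 * m
  · set c : ℂ := -1 / (2 * PowerSeries.coeff n y) with hc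
    have hc0 : c ≠ 0 := by rw [hc]; simp [hn]
    have hne := circle_ne_zero m hm y c hc0 (h0 0 (by omega)) hred
    have hL := PowerSeries.coe_toNat_order hne
    have hlt : n < ((PowerSeries.X : PowerSeries ℂ) ^ (2 * m) + y ^ 2
        + 2 * PowerSeries.C c * y).order.toNat := by
      by_contra hcon
      apply PowerSeries.coeff_order hne
      rw [hco0 _ _ (by omega)]
      rcases (not_lt.mp hcon).lt_or_eq with h | h
      · rw [h0 _ h, if_neg (by omega)]; simp
      · rw [h, if_pos h2, hc]; field_simp; ring
    refine ⟨c, _, by omega, by omega, hL.symm, fun b d => ?_⟩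
    by_cases hb : b = 0
    · subst hb
      by_cases hd : d = c
      · subst hd
        rw [hL]; simp
      · refine (PowerSeries.order_le n ?_).trans (by exact_mod_cast hlt.le)
        rw [hco 0 d n (by omega), if_pos h2, if_neg (by omega)]
        intro h
        apply hd
        rw [hc, eq_div_iff (by simpa using hn)]
        linear_combination h
    · exact hB b d _ hb (by omega)
  · refine ⟨0, 2 * m, by omega, Ne.symm h2, ?_, fun b d => ?_⟩
    · rw [PowerSeries.order_eq_nat]
      constructor
      · rw [hco0 _ _ (by omega)]; simp
      · intro i hi
        rw [hco0 _ _ (by omega), if_neg (by omega)]; simp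
    · by_cases hb : b = 0
      · subst hb
        by_cases hd : d = 0 ∨ 2 * m < n
        · apply PowerSeries.order_le
          rw [hco _ _ _ (by omega)]
          rcases hd with rfl | hd
          · simp
          · rw [h0 _ hd]; simp
        · push Not at hd
          refine (PowerSeries.order_le n ?_).trans (by exact_mod_cast hd.2)
          rw [hco _ _ _ (by omega), if_neg h2]
          simpa using ⟨hd.1, hn⟩
      · exact hB b d _ hb (by omega)

end

/-- **Theorem 3.9 (parametrised form).** Let `γ(t) = (t^m, y(t))`, `2 ≤ m < n = ord y`,
with `y` reduced with respect to `m`, parametrise a branch of the curve `f = 0` with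
`f_y ∘ γ ≠ 0`. Then the maximal order of contact `λ` of `γ` with complex circles
through the origin is finite, `ord(v_f ∘ γ)` and `ord(i_f ∘ γ)` are finite, and
`ord(v_f ∘ γ) + 3(m − 1) + 3 = ord(i_f ∘ γ) + 3·ord(f_y ∘ γ) + λ`
(which renders `V_f = I_f + 3μ(f) + λ(f) − 3`). -/
theorem vertex_eq_inflection_milnor_contact
    (f : MvPolynomial (Fin 2) ℂ) (m n : ℕ) (hm : 2 ≤ m) (hmn : m < n)
    (y : PowerSeries ℂ) (hy : y.order = n)
    (hred : ∃ i, (PowerSeries.coeff i) y ≠ 0 ∧ ¬ m ∣ i)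
    (hf : MvPolynomial.aeval ![(PowerSeries.X : PowerSeries ℂ) ^ m, y] f = 0)
    (hfy : MvPolynomial.aeval ![(PowerSeries.X : PowerSeries ℂ) ^ m, y] (dy f) ≠ 0) :
    (MvPolynomial.aeval ![(PowerSeries.X : PowerSeries ℂ) ^ m, y] (vert f)).order ≠ ⊤ ∧
    (MvPolynomial.aeval ![(PowerSeries.X : PowerSeries ℂ) ^ m, y] (infl f)).order ≠ ⊤ ∧
    (⨆ p : ℂ × ℂ, ((PowerSeries.X : PowerSeries ℂ) ^ (2 * m) + y ^ 2 +
        2 * PowerSeries.C p.1 * (PowerSeries.X : PowerSeries ℂ) ^ m +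
        2 * PowerSeries.C p.2 * y).order) ≠ ⊤ ∧
    (MvPolynomial.aeval ![(PowerSeries.X : PowerSeries ℂ) ^ m, y] (vert f)).order
        + ((3 * (m - 1) : ℕ) : ℕ∞) + 3
      = (MvPolynomial.aeval ![(PowerSeries.X : PowerSeries ℂ) ^ m, y] (infl f)).order
          + 3 * (MvPolynomial.aeval ![(PowerSeries.X : PowerSeries ℂ) ^ m, y] (dy f)).order
          + ⨆ p : ℂ × ℂ, ((PowerSeries.X : PowerSeries ℂ) ^ (2 * m) + y ^ 2 +
              2 * PowerSeries.C p.1 * (PowerSeries.X : PowerSeries ℂ) ^ m +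
              2 * PowerSeries.C p.2 * y).order := by
  obtain ⟨c, L, hmL, hnL, hg, hub⟩ := exists_contact m n (by omega) hmn y hy hred
  have hsup : (⨆ p : ℂ × ℂ, ((PowerSeries.X : PowerSeries ℂ) ^ (2 * m) + y ^ 2 +
        2 * PowerSeries.C p.1 * (PowerSeries.X : PowerSeries ℂ) ^ m +
        2 * PowerSeries.C p.2 * y).order) = (L : ℕ∞) := by
    apply le_antisymm
    · exact iSup_le fun p => hub p.1 p.2
    · rw [← hg]
      refine le_trans (le_of_eq ?_) (le_iSup _ ((0, c) : ℂ × ℂ))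
      simp
  have hxo : (euler ((PowerSeries.X : PowerSeries ℂ) ^ m)).order = (m : ℕ∞) := by
    rw [euler_X_pow, mul_comm, order_X_pow_mul]
    rw [map_natCast]
    exact Nat.cast_ne_zero.mpr (by omega)
  have hx0 : euler ((PowerSeries.X : PowerSeries ℂ) ^ m) ≠ 0 := by
    intro h
    rw [h, PowerSeries.order_zero] at hxo
    exact ENat.coe_ne_top m hxo.symm
  obtain ⟨hi, hv⟩ := param_id _ y f hf hx0
  have hi' := congrArg PowerSeries.order hi
  have hv' := congrArg PowerSeries.order hv
  rw [PowerSeries.order_mul, PowerSeries.order_mul, order_W m n (by omega) hmn y hy,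
    PowerSeries.order_neg, PowerSeries.order_pow, PowerSeries.order_pow, hxo] at hi'
  rw [PowerSeries.order_mul, PowerSeries.order_mul,
    order_V m n L (by omega) hmn hmL hnL y c hy hg, PowerSeries.order_pow,
    PowerSeries.order_pow, hxo] at hv'
  rw [hsup]
  have hb := PowerSeries.coe_toNat_order hfy
  rw [← hb] at hi' hv' ⊢
  generalize (PowerSeries.order (aeval ![(PowerSeries.X : PowerSeries ℂ) ^ m, y]
    (dy f))).toNat = B at hi' hv' ⊢
  generalize PowerSeries.order (aeval ![(PowerSeries.X : PowerSeries ℂ) ^ m, y]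
    (infl f)) = I at hi' ⊢
  generalize PowerSeries.order (aeval ![(PowerSeries.X : PowerSeries ℂ) ^ m, y]
    (vert f)) = V at hv' ⊢
  simp only [nsmul_eq_mul] at hi' hv'
  have hI : I ≠ ⊤ := by
    rintro rfl
    rw [top_add] at hi'
    exact absurd hi' (by exact_mod_cast (ENat.coe_ne_top (3 * B + (m + n))).symm)
  have hV : V ≠ ⊤ := by
    rintro rfl
    rw [top_add] at hv'
    exact absurd hv' (by exact_mod_cast (ENat.coe_ne_top (6 * B + (m + n + L))).symm)
  refine ⟨hV, hI, ENat.coe_ne_top L, ?_⟩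
  lift I to ℕ using hI
  lift V to ℕ using hV
  have hi2 : I + 3 * m = 3 * B + (m + n) := by exact_mod_cast hi'
  have hv2 : V + 6 * m = 6 * B + (m + n + L) := by exact_mod_cast hv'
  have : V + 3 * (m - 1) + 3 = I + 3 * B + L := by omega
  exact_mod_cast this
end

section
/- Let f ∈ R := MvPolynomial ℂ (Fin 2) be squarefree. Then the quotient A ⧸ Ideal.span {ι f, ι(i_f)} is NOT a finite-dimensional ℂ-vector space if and only if there exist a, b ∈ ℂ with (a,b) ≠ (0,0) such that the linear polynomial a·X + b·Y divides f in R. -/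
open MvPolynomial

theorem aux_elim {S : Type*} [CommRing S] [IsDomain S] [UniqueFactorizationMonoid S]
    (F G : Polynomial S) (h : IsRelPrime F G) :
    ∃ r : S, r ≠ 0 ∧ Polynomial.C r ∈ Ideal.span {F, G} := by
  classical
  let _ : NormalizedGCDMonoid S := Classical.choice (by infer_instance)
  let K := FractionRing S
  have hinj : Function.Injective (algebraMap S K) := IsFractionRing.injective S K
  have hminj := Polynomial.map_injective _ hinj
  have norm : ∀ p : Polynomial K, ∃ (b : S) (p' : Polynomial S), b ≠ 0 ∧
      p'.map (algebraMap S K) = Polynomial.C (algebraMap S K b) * p := by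
    intro p
    obtain ⟨b, hbm, hb⟩ := IsLocalization.integerNormalization_spec (nonZeroDivisors S) p
    refine ⟨b, _, nonZeroDivisors.ne_zero hbm, hb.trans ?_⟩
    rw [Algebra.smul_def]
    rfl
  have hrel : IsRelPrime (F.map (algebraMap S K)) (G.map (algebraMap S K)) := by
    intro d hdF hdG
    obtain ⟨b, d', hb, hd'⟩ := norm d
    have hd0 : d ≠ 0 := by
      rintro rfl
      rw [zero_dvd_iff] at hdF hdG
      rw [Polynomial.map_eq_zero_iff hinj] at hdF hdG
      subst hdF hdG
      exact Polynomial.not_isUnit_X (h (dvd_zero _) (dvd_zero _))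
    have hbK : IsUnit (Polynomial.C (algebraMap S K b)) :=
      Polynomial.isUnit_C.2 (IsUnit.mk0 _ (by simpa using hb))
    have hd'0 : d' ≠ 0 := by
      rintro rfl
      rw [Polynomial.map_zero] at hd'
      exact (mul_ne_zero hbK.ne_zero hd0) hd'.symm
    have hc : d'.content ≠ 0 := by simpa [Polynomial.content_eq_zero_iff] using hd'0
    have hcK : IsUnit (Polynomial.C (algebraMap S K d'.content)) :=
      Polynomial.isUnit_C.2 (IsUnit.mk0 _ (by simpa using hc))
    have e1 : Polynomial.C (algebraMap S K d'.content) * d'.primPart.map (algebraMap S K) =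
        Polynomial.C (algebraMap S K b) * d := by
      rw [← hd']
      conv_rhs => rw [d'.eq_C_content_mul_primPart]
      rw [Polynomial.map_mul, Polynomial.map_C]
    have hass : d'.primPart.map (algebraMap S K) ∣ d :=
      (hbK.dvd_mul_left).1 (e1 ▸ dvd_mul_left _ _)
    have hass2 : d ∣ d'.primPart.map (algebraMap S K) :=
      (hcK.dvd_mul_left).1 (e1 ▸ dvd_mul_left _ _)
    have h1 := d'.isPrimitive_primPart.dvd_of_fraction_map_dvd_fraction_map (K := K)
       (hass.trans hdF)
    have h2 := d'.isPrimitive_primPart.dvd_of_fraction_map_dvd_fraction_map (K := K)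
       (hass.trans hdG)
    have hu := (h h1 h2).map (Polynomial.mapRingHom (algebraMap S K))
    exact isUnit_of_dvd_unit hass2 hu
  obtain ⟨u, v, huv⟩ := hrel.isCoprime
  obtain ⟨b, u', hb, hu'⟩ := norm u
  obtain ⟨c, v', hc, hv'⟩ := norm v
  refine ⟨b * c, mul_ne_zero hb hc, ?_⟩
  rw [Ideal.mem_span_pair]
  refine ⟨Polynomial.C c * u', Polynomial.C b * v', hminj ?_⟩
  simp only [Polynomial.map_add, Polynomial.map_mul, Polynomial.map_C, hu', hv', map_mul]
  linear_combination (Polynomial.C (algebraMap S K b) * Polynomial.C (algebraMap S K c)) * huv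


theorem aux_fin (J : Ideal (MvPowerSeries (Fin 2) ℂ)) (n m : ℕ)
    (h0 : (MvPowerSeries.X 0 : MvPowerSeries (Fin 2) ℂ) ^ n ∈ J)
    (h1 : (MvPowerSeries.X 1 : MvPowerSeries (Fin 2) ℂ) ^ m ∈ J) :
    FiniteDimensional ℂ (MvPowerSeries (Fin 2) ℂ ⧸ J) := by
  classical
  let T : MvPowerSeries (Fin 2) ℂ →ₗ[ℂ] (Fin n × Fin m → ℂ) :=
    LinearMap.pi fun ij => MvPowerSeries.coeff
      (Finsupp.single 0 (ij.1 : ℕ) + Finsupp.single 1 (ij.2 : ℕ))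
  have hker : LinearMap.ker T ≤ J.restrictScalars ℂ := by
    intro φ hφ
    have hφ' : ∀ e : Fin 2 →₀ ℕ, e 0 < n → e 1 < m → MvPowerSeries.coeff e φ = 0 := by
      intro e he0 he1
      have := congrFun (LinearMap.mem_ker.1 hφ) (⟨e 0, he0⟩, ⟨e 1, he1⟩)
      simp only [T, LinearMap.pi_apply, Pi.zero_apply] at this
      have he : e = Finsupp.single 0 (e 0) + Finsupp.single 1 (e 1) := by
        ext i
        fin_cases i <;> simp
      rw [he]
      exact this
    let ψ : MvPowerSeries (Fin 2) ℂ := fun e => if n ≤ e 0 then MvPowerSeries.coeff e φ else 0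
    have hψ : ∀ e, MvPowerSeries.coeff e ψ = if n ≤ e 0 then MvPowerSeries.coeff e φ else 0 :=
      fun e => rfl
    have a1 : (MvPowerSeries.X 0 : MvPowerSeries (Fin 2) ℂ) ^ n ∣ ψ := by
      rw [MvPowerSeries.X_pow_dvd_iff]
      intro e he
      rw [hψ, if_neg (by omega)]
    have a2 : (MvPowerSeries.X 1 : MvPowerSeries (Fin 2) ℂ) ^ m ∣ φ - ψ := by
      rw [MvPowerSeries.X_pow_dvd_iff]
      intro e he
      rw [map_sub, hψ]
      split_ifs with hh
      · simp
      · rw [hφ' e (by omega) he, sub_zero]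
    have := J.add_mem (J.mem_of_dvd a1 h0) (J.mem_of_dvd a2 h1)
    simpa using this
  have : FiniteDimensional ℂ (MvPowerSeries (Fin 2) ℂ ⧸ LinearMap.ker T) :=
    T.quotKerEquivRange.symm.finiteDimensional
  have : FiniteDimensional ℂ (MvPowerSeries (Fin 2) ℂ ⧸ J.restrictScalars ℂ) :=
    Module.Finite.of_surjective (Submodule.factor hker) (Submodule.factor_surjective hker)
  exact Module.Finite.equiv (Submodule.Quotient.restrictScalarsEquiv ℂ J)


theorem aux_hensel (P : Polynomial (Polynomial ℂ)) (hP : Irreducible P)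
    (hP' : Polynomial.derivative P ≠ 0) :
    ∃ (x0 : ℂ) (y : PowerSeries ℂ),
      Polynomial.eval₂ (Polynomial.aeval (PowerSeries.C x0 + PowerSeries.X :
        PowerSeries ℂ) : Polynomial ℂ →ₐ[ℂ] PowerSeries ℂ).toRingHom y P = 0 ∧
      Polynomial.eval₂ (Polynomial.aeval (PowerSeries.C x0 + PowerSeries.X :
        PowerSeries ℂ) : Polynomial ℂ →ₐ[ℂ] PowerSeries ℂ).toRingHom y
          (Polynomial.derivative P) ≠ 0 := by
  have hdeg : P.natDegree ≠ 0 := by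
    intro h
    rw [Polynomial.natDegree_eq_zero] at h
    obtain ⟨r, rfl⟩ := h
    simp at hP'
  have hnd : ¬ P ∣ Polynomial.derivative P := by
    intro h
    exact absurd (Polynomial.natDegree_le_of_dvd h hP')
      (not_le.2 (Polynomial.natDegree_derivative_lt hdeg))
  have hrel : IsRelPrime P (Polynomial.derivative P) :=
    (hP.isRelPrime_iff_not_dvd).2 hnd
  obtain ⟨r, hr, hrm⟩ := aux_elim _ _ hrel
  obtain ⟨u, v, huv⟩ := Ideal.mem_span_pair.1 hrm
  obtain ⟨x0, hx0⟩ : ∃ x0 : ℂ, (r * P.leadingCoeff).eval x0 ≠ 0 := by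
    by_contra! hh
    have : r * P.leadingCoeff = 0 := Polynomial.funext (by simpa using hh)
    exact mul_ne_zero hr (Polynomial.leadingCoeff_ne_zero.2 hP.ne_zero) this
  rw [Polynomial.eval_mul] at hx0
  set σ : Polynomial ℂ →+* PowerSeries ℂ := (Polynomial.aeval (PowerSeries.C x0 + PowerSeries.X :
        PowerSeries ℂ) : Polynomial ℂ →ₐ[ℂ] PowerSeries ℂ).toRingHom with hσ
  have hσ0 : (PowerSeries.constantCoeff (R := ℂ)).comp σ = Polynomial.evalRingHom x0 := by
    ext a
    · simp [hσ]
    · simp [hσ]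
  have hσ1 : ∀ q, PowerSeries.constantCoeff (σ q) = q.eval x0 := fun q =>
    RingHom.congr_fun hσ0 q
  have hlc : P.leadingCoeff.eval x0 ≠ 0 := right_ne_zero_of_mul hx0
  have hr0 : r.eval x0 ≠ 0 := left_ne_zero_of_mul hx0
  have hlu : IsUnit (σ P.leadingCoeff) := by
    rw [PowerSeries.isUnit_iff_constantCoeff, hσ1]
    exact IsUnit.mk0 _ hlc
  obtain ⟨y0, hy0⟩ : ∃ y0, (P.map (Polynomial.evalRingHom x0)).IsRoot y0 := by
    apply IsAlgClosed.exists_root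
    rw [Polynomial.degree_map_eq_of_leadingCoeff_ne_zero _ (by simpa using hlc)]
    rw [Polynomial.degree_eq_natDegree hP.ne_zero]
    exact_mod_cast hdeg
  obtain ⟨w, hw⟩ := hlu
  have hlcF : (P.map σ).leadingCoeff = σ P.leadingCoeff :=
    Polynomial.leadingCoeff_map_of_leadingCoeff_ne_zero _ (by rw [← hw]; exact w.ne_zero)
  have hmon : (Polynomial.C (↑w⁻¹ : PowerSeries ℂ) * P.map σ).Monic := by
    rw [Polynomial.Monic, Polynomial.leadingCoeff_mul, Polynomial.leadingCoeff_C, hlcF, ← hw]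
    simp
  have hev : ∀ (Q : Polynomial (Polynomial ℂ)) , PowerSeries.constantCoeff
      ((Q.map σ).eval (PowerSeries.C y0)) = (Q.map (Polynomial.evalRingHom x0)).eval y0 := by
    intro Q
    rw [← hσ0, Polynomial.eval_map, Polynomial.eval_map, Polynomial.hom_eval₂]
    simp
  have hd0 : (Polynomial.map (Polynomial.evalRingHom x0) (Polynomial.derivative P)).eval y0 ≠ 0 := by
    intro h0
    have := congrArg (fun q => (q.map (Polynomial.evalRingHom x0)).eval y0) huv
    simp only [Polynomial.map_add, Polynomial.map_mul, Polynomial.eval_add, Polynomial.eval_mul,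
      h0, hy0.eq_zero] at this
    simp at this
    exact hr0 this.symm
  obtain ⟨y, hy, -⟩ := HenselianRing.is_henselian (I := (Ideal.span {PowerSeries.X} :
    Ideal (PowerSeries ℂ))) _ hmon (PowerSeries.C y0) (by
      rw [Ideal.mem_span_singleton, PowerSeries.X_dvd_iff, Polynomial.eval_mul, map_mul, hev,
        hy0.eq_zero, mul_zero]) (by
      apply IsUnit.map
      rw [PowerSeries.isUnit_iff_constantCoeff, Polynomial.derivative_C_mul, Polynomial.eval_mul,
        map_mul, Polynomial.derivative_map, hev, Polynomial.eval_C]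
      refine IsUnit.mul ?_ (IsUnit.mk0 _ hd0)
      exact IsUnit.map _ (Units.isUnit _))
  have hy1 : Polynomial.eval₂ σ y P = 0 := by
    rw [Polynomial.IsRoot, Polynomial.eval_mul, Polynomial.eval_C, Polynomial.eval_map] at hy
    simpa using hy
  refine ⟨x0, y, hy1, ?_⟩
  intro h2
  have := congrArg (Polynomial.eval₂ σ y) huv
  rw [Polynomial.eval₂_add, Polynomial.eval₂_mul, Polynomial.eval₂_mul, hy1, h2,
    Polynomial.eval₂_C] at this
  apply hr0
  rw [← hσ1, ← this]
  simp

theorem aux_comm (q : MvPolynomial (Fin 2) ℂ) :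
    pderiv 0 (pderiv 1 q) = pderiv 1 (pderiv 0 q) := by
  induction q using MvPolynomial.induction_on with
  | C a => simp
  | add p q hp hq => simp only [map_add, hp, hq]
  | mul_X p i hp =>
    fin_cases i
    all_goals
      simp [Derivation.leibniz, hp, pderiv_X]; ring

theorem aux_chain (v : Fin 2 → PowerSeries ℂ) (q : MvPolynomial (Fin 2) ℂ) :
    PowerSeries.derivative ℂ (aeval v q) =
      aeval v (dx q) * PowerSeries.derivative ℂ (v 0) +
      aeval v (dy q) * PowerSeries.derivative ℂ (v 1) := by
  unfold dx dy
  induction q using MvPolynomial.induction_on with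
  | C a => simp
  | add p q hp hq => simp only [map_add, hp, hq]; ring
  | mul_X p i hp =>
    fin_cases i
    all_goals
      simp [Derivation.leibniz, hp, pderiv_X]
      ring

theorem aux_lin (x0 : ℂ) (y : PowerSeries ℂ) (p : MvPolynomial (Fin 2) ℂ)
    (h0 : aeval ![PowerSeries.C x0 + PowerSeries.X, y] p = 0)
    (h1 : aeval ![PowerSeries.C x0 + PowerSeries.X, y] (dy p) ≠ 0)
    (h2 : aeval ![PowerSeries.C x0 + PowerSeries.X, y] (infl p) = 0) :
    ∃ c d : ℂ, y = PowerSeries.C d + PowerSeries.C c * (PowerSeries.C x0 + PowerSeries.X) := by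
  set v := ![PowerSeries.C x0 + PowerSeries.X, y] with hv
  have hv0 : PowerSeries.derivative ℂ (v 0) = 1 := by simp [hv]
  have hv1 : v 1 = y := rfl
  have hc : ∀ q, PowerSeries.derivative ℂ (aeval v q) = aeval v (dx q) +
      aeval v (dy q) * PowerSeries.derivative ℂ y := by
    intro q
    rw [aux_chain, hv0, hv1, mul_one]
  have e1 : aeval v (dx p) + aeval v (dy p) * PowerSeries.derivative ℂ y = 0 := by
    rw [← hc, h0, map_zero]
  have e2 := congrArg (PowerSeries.derivative ℂ) e1
  have hcomm : dx (dy p) = dy (dx p) := by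
    unfold dx dy
    exact aux_comm p
  rw [map_add, Derivation.leibniz, hc, hc, map_zero, hcomm] at e2
  simp only [smul_eq_mul] at e2
  simp only [infl, map_add, map_sub, map_mul, map_pow, map_ofNat] at h2
  have e3 : aeval v (dy p) ^ 3 * PowerSeries.derivative ℂ (PowerSeries.derivative ℂ y) = 0 := by
    generalize PowerSeries.derivative ℂ (PowerSeries.derivative ℂ y) = y2 at *
    generalize PowerSeries.derivative ℂ y = y1 at *
    have e1' : aeval v (dx p) = - (aeval v (dy p) * y1) := by linear_combination e1
    rw [e1'] at h2
    linear_combination (aeval v (dy p))^2 * e2 - h2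
  have e4 : PowerSeries.derivative ℂ (PowerSeries.derivative ℂ y) = 0 :=
    (mul_eq_zero.1 e3).resolve_left (pow_ne_zero _ h1)
  refine ⟨PowerSeries.coeff 1 y, PowerSeries.coeff 0 y - PowerSeries.coeff 1 y * x0, ?_⟩
  have e5 : PowerSeries.derivative ℂ y = PowerSeries.C (PowerSeries.coeff 1 y) := by
    apply PowerSeries.derivative.ext
    · rw [e4]; simp
    · rw [← PowerSeries.coeff_zero_eq_constantCoeff_apply, PowerSeries.coeff_derivative]
      simp
  apply PowerSeries.derivative.ext
  · rw [e5]; simp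
  · simp

theorem aux_irr (p : MvPolynomial (Fin 2) ℂ) (hp : Irreducible p)
    (h00 : constantCoeff p = 0) (hinf : p ∣ infl p) :
    ∃ a b : ℂ, (a, b) ≠ (0, 0) ∧ (C a * X 0 + C b * X 1) ∣ p := by
  let e := Polynomial.Bivariate.equivMvPolynomial ℂ
  obtain ⟨P, rfl⟩ := e.surjective p
  have hP : Irreducible P := (MulEquiv.irreducible_iff e.toRingEquiv.toMulEquiv).1 hp
  have hcc : ∀ Q, constantCoeff (e Q) = (Q.eval 0).eval 0 := by
    intro Q
    have : (constantCoeff.comp e.toRingEquiv.toRingHom) =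
      (Polynomial.evalRingHom (0 : ℂ)).comp (Polynomial.evalRingHom (0 : Polynomial ℂ)) := by
      ext <;> simp [e]
    exact RingHom.congr_fun this Q
  rw [hcc] at h00
  by_cases hd : Polynomial.derivative P = 0
  · have h1 := Polynomial.derivative_eq_zero.1 hd
    rw [Polynomial.natDegree_eq_zero] at h1
    obtain ⟨r, rfl⟩ := h1
    rw [Polynomial.eval_C] at h00
    have h2 : Polynomial.X ∣ r := by
      rw [Polynomial.X_dvd_iff, Polynomial.coeff_zero_eq_eval_zero, h00]
    obtain ⟨s, rfl⟩ := h2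
    refine ⟨1, 0, by simp, ?_⟩
    simp [e]
  · obtain ⟨x0, y, hy, hy'⟩ := aux_hensel P hP hd
    have hΦ : ∀ Q, aeval ![PowerSeries.C x0 + PowerSeries.X, y] (e Q) =
      Polynomial.eval₂ (Polynomial.aeval (PowerSeries.C x0 + PowerSeries.X :
        PowerSeries ℂ) : Polynomial ℂ →ₐ[ℂ] PowerSeries ℂ).toRingHom y Q := by
      intro Q
      have : ((aeval ![PowerSeries.C x0 + PowerSeries.X, y] :
          MvPolynomial (Fin 2) ℂ →ₐ[ℂ] PowerSeries ℂ).toRingHom.comp e.toRingEquiv.toRingHom) =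
        Polynomial.eval₂RingHom (Polynomial.aeval (PowerSeries.C x0 + PowerSeries.X :
        PowerSeries ℂ) : Polynomial ℂ →ₐ[ℂ] PowerSeries ℂ).toRingHom y := by
        ext <;> simp [e]
      exact RingHom.congr_fun this Q
    obtain ⟨c, d, hcd⟩ := aux_lin x0 y (e P) (by rw [hΦ, hy])
      (by
        unfold dy
        rw [show pderiv 1 (e P) = e (Polynomial.derivative P) from
          Polynomial.Bivariate.pderiv_one_equivMvPolynomial P, hΦ]
        exact hy')
      (by
        obtain ⟨q, hq⟩ := hinf
        rw [hq, map_mul, hΦ, hy, zero_mul])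
    set σ : Polynomial ℂ →+* PowerSeries ℂ := (Polynomial.aeval (PowerSeries.C x0 + PowerSeries.X :
        PowerSeries ℂ) : Polynomial ℂ →ₐ[ℂ] PowerSeries ℂ).toRingHom with hσ
    have hσinj : Function.Injective σ := by
      rw [injective_iff_map_eq_zero]
      intro q hq
      have : σ q = ((q.comp (Polynomial.C x0 + Polynomial.X) : Polynomial ℂ) : PowerSeries ℂ) := by
        have : σ = (Polynomial.coeToPowerSeries.ringHom).comp
            (Polynomial.compRingHom (Polynomial.C x0 + Polynomial.X)) := by
          ext1
          · ext1 a; simp [hσ]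
          · simp [hσ]
        exact RingHom.congr_fun this q
      rw [this, Polynomial.coe_eq_zero_iff] at hq
      have h3 := congrArg (fun r => r.comp (Polynomial.X - Polynomial.C x0)) hq
      simpa [Polynomial.comp_assoc] using h3
    have hyσ : y = σ (Polynomial.C d + Polynomial.C c * Polynomial.X) := by
      rw [hcd]; simp [hσ]
    have hroot : P.IsRoot (Polynomial.C d + Polynomial.C c * Polynomial.X) := by
      apply hσinj
      rw [map_zero, ← hy, hyσ, Polynomial.eval₂_at_apply]
    have hdvd := Polynomial.dvd_iff_isRoot.2 hroot
    have hassoc : P ∣ (Polynomial.X - Polynomial.C (Polynomial.C d + Polynomial.C c * Polynomial.X)) := by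
      have hirr := Polynomial.irreducible_X_sub_C (Polynomial.C d + Polynomial.C c * Polynomial.X)
      exact ((hirr.associated_of_dvd hP hdvd).symm).dvd
    have hd0 : d = 0 := by
      obtain ⟨q, hq⟩ := hassoc
      have := congrArg (fun Q => (Q.eval 0).eval 0) hq
      simpa [h00] using this
    subst hd0
    refine ⟨-c, 1, by simp, ?_⟩
    have := map_dvd e hdvd
    convert this using 1
    simp [e]
    ring

theorem aux_infl_mul (p g : MvPolynomial (Fin 2) ℂ) :
    p ∣ infl (p * g) - g ^ 3 * infl p := by
  have hx : ∀ a b, dx (a * b) = a * dx b + b * dx a := by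
    intro a b; simp [dx, Derivation.leibniz]
  have hy : ∀ a b, dy (a * b) = a * dy b + b * dy a := by
    intro a b; simp [dy, Derivation.leibniz]
  have hxa : ∀ a b, dx (a + b) = dx a + dx b := by
    intro a b; simp [dx]
  have hya : ∀ a b, dy (a + b) = dy a + dy b := by
    intro a b; simp [dy]
  simp only [infl, hx, hy, hxa, hya]
  generalize dx (dx p) = pxx
  generalize dy (dx p) = pxy
  generalize dy (dy p) = pyy
  generalize dx (dx g) = gxx
  generalize dy (dx g) = gxy
  generalize dy (dy g) = gyy
  generalize dx p = px
  generalize dy p = py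
  generalize dx g = gx
  generalize dy g = gy
  rw [← Ideal.mem_span_singleton, ← Ideal.Quotient.eq_zero_iff_mem]
  have hp : Ideal.Quotient.mk (Ideal.span {p}) p = 0 := by
    rw [Ideal.Quotient.eq_zero_iff_mem]; exact Ideal.mem_span_singleton_self p
  simp only [map_add, map_sub, map_mul, map_pow, map_ofNat, hp]
  ring

theorem aux_unit_pow (i : Fin 2) (r : Polynomial ℂ) (hr : r ≠ 0)
    (J : Ideal (MvPowerSeries (Fin 2) ℂ)) (h : ι (Polynomial.aeval (X i) r) ∈ J) :
    ∃ n, (MvPowerSeries.X i : MvPowerSeries (Fin 2) ℂ) ^ n ∈ J := by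
  obtain ⟨s, hs, hs'⟩ := Polynomial.exists_eq_pow_rootMultiplicity_mul_and_not_dvd r hr 0
  refine ⟨r.rootMultiplicity 0, ?_⟩
  generalize r.rootMultiplicity 0 = n at *
  rw [map_zero, sub_zero] at hs hs'
  rw [Polynomial.X_dvd_iff] at hs'
  rw [hs, map_mul, map_pow, Polynomial.aeval_X, map_mul, map_pow] at h
  have hu : IsUnit (ι (Polynomial.aeval (X i) s)) := by
    rw [MvPowerSeries.isUnit_iff_constantCoeff]
    apply IsUnit.mk0
    have : (MvPowerSeries.constantCoeff.comp (ι.comp (Polynomial.aeval (X i) :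
        Polynomial ℂ →ₐ[ℂ] MvPolynomial (Fin 2) ℂ).toRingHom)) = Polynomial.constantCoeff := by
      ext <;> simp [ι]
    have h2 := RingHom.congr_fun this s
    simp only [RingHom.comp_apply] at h2
    erw [h2]
    simpa using hs'
  have h3 : ι (X i) = MvPowerSeries.X i := by simp [ι]
  rw [h3] at h
  exact (Ideal.mul_unit_mem_iff_mem _ hu).1 h

theorem aux_elim1 (F G : MvPolynomial (Fin 2) ℂ) (h : IsRelPrime F G)
    (e : Polynomial (Polynomial ℂ) ≃ₐ[ℂ] MvPolynomial (Fin 2) ℂ) :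
    ∃ r : Polynomial ℂ, r ≠ 0 ∧ Polynomial.aeval (e (Polynomial.C Polynomial.X)) r ∈
      Ideal.span {F, G} := by
  have h' : IsRelPrime (e.symm F) (e.symm G) := by
    intro d h1 h2
    have := h (by simpa using map_dvd e h1) (by simpa using map_dvd e h2)
    simpa using this.map e.symm
  obtain ⟨r, hr, hm⟩ := aux_elim _ _ h'
  refine ⟨r, hr, ?_⟩
  have : Polynomial.aeval (e (Polynomial.C Polynomial.X)) r = e (Polynomial.C r) := by
    have : (Polynomial.aeval (e (Polynomial.C Polynomial.X))) =
      (e : _ →ₐ[ℂ] MvPolynomial (Fin 2) ℂ).comp (Polynomial.CAlgHom) := by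
      ext
      simp
    rw [this]; simp
  rw [this]
  obtain ⟨u, v, huv⟩ := Ideal.mem_span_pair.1 hm
  rw [← huv]
  rw [Ideal.mem_span_pair]
  exact ⟨e u, e v, by simp⟩

theorem aux_finite (F G : MvPolynomial (Fin 2) ℂ) (h : IsRelPrime F G)
    (J : Ideal (MvPowerSeries (Fin 2) ℂ)) (hF : ι F ∈ J) (hG : ι G ∈ J) :
    FiniteDimensional ℂ (MvPowerSeries (Fin 2) ℂ ⧸ J) := by
  have key : ∀ q ∈ Ideal.span {F, G}, ι q ∈ J := by
    intro q hq
    obtain ⟨u, v, rfl⟩ := Ideal.mem_span_pair.1 hq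
    rw [map_add, map_mul, map_mul]
    exact J.add_mem (J.mul_mem_left _ hF) (J.mul_mem_left _ hG)
  let e0 := Polynomial.Bivariate.equivMvPolynomial ℂ
  let e1 := e0.trans (renameEquiv ℂ (Equiv.swap (0 : Fin 2) 1))
  obtain ⟨r, hr, hrm⟩ := aux_elim1 F G h e0
  obtain ⟨s, hs, hsm⟩ := aux_elim1 F G h e1
  have t0 : e0 (Polynomial.C Polynomial.X) = X 0 := by simp [e0]
  have t1 : e1 (Polynomial.C Polynomial.X) = X 1 := by simp [e1, e0]
  rw [t0] at hrm
  rw [t1] at hsm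
  obtain ⟨n, hn⟩ := aux_unit_pow 0 r hr J (key _ hrm)
  obtain ⟨m, hm⟩ := aux_unit_pow 1 s hs J (key _ hsm)
  exact aux_fin J n m hn hm

theorem aux_backward (f : MvPolynomial (Fin 2) ℂ) (a b : ℂ) (hab : (a, b) ≠ (0, 0))
    (hd : (C a * X 0 + C b * X 1) ∣ f) :
    ¬ FiniteDimensional ℂ (MvPowerSeries (Fin 2) ℂ ⧸ Ideal.span {ι f, ι (infl f)}) := by
  intro hfin
  set l : MvPolynomial (Fin 2) ℂ := C a * X 0 + C b * X 1 with hl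
  have hli : infl l = 0 := by
    simp [infl, dx, dy, hl, pderiv_X, Derivation.leibniz]
  have hdi : l ∣ infl f := by
    obtain ⟨g, rfl⟩ := hd
    have := aux_infl_mul l g
    rwa [hli, mul_zero, sub_zero] at this
  have hs : MvPowerSeries.HasSubst (![PowerSeries.C b * PowerSeries.X,
      - PowerSeries.C a * PowerSeries.X] : Fin 2 → PowerSeries ℂ) := by
    apply MvPowerSeries.hasSubst_of_constantCoeff_zero
    intro i
    change PowerSeries.constantCoeff _ = 0
    fin_cases i <;> simp
  let T : MvPowerSeries (Fin 2) ℂ →ₐ[ℂ] PowerSeries ℂ := MvPowerSeries.substAlgHom hs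
  have hX : ∀ i, T (MvPowerSeries.X i) = (![PowerSeries.C b * PowerSeries.X,
      - PowerSeries.C a * PowerSeries.X] : Fin 2 → PowerSeries ℂ) i := by
    intro i
    exact MvPowerSeries.substAlgHom_X hs i
  have hC : ∀ c : ℂ, T (MvPowerSeries.C c) = PowerSeries.C c := by
    intro c
    exact T.commutes c
  have hTl : T (ι l) = 0 := by
    have : ι l = MvPowerSeries.C a * MvPowerSeries.X 0 + MvPowerSeries.C b * MvPowerSeries.X 1 := by
      simp [ι, hl]
    rw [this, map_add, map_mul, map_mul, hX, hX, hC, hC]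
    simp
    ring
  have hJ : Ideal.span {ι f, ι (infl f)} ≤ RingHom.ker T := by
    rw [Ideal.span_le]
    have : ∀ q, l ∣ q → T (ι q) = 0 := by
      rintro q ⟨g, rfl⟩
      rw [map_mul, map_mul, hTl, zero_mul]
    rintro x (rfl | rfl)
    · exact this _ hd
    · exact this _ hdi
  let T' : (MvPowerSeries (Fin 2) ℂ ⧸ Ideal.span {ι f, ι (infl f)}) →ₐ[ℂ] PowerSeries ℂ :=
    Ideal.Quotient.liftₐ _ T hJ
  have hint : ∀ z, IsAlgebraic ℂ (T z) := by
    intro z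
    have h1 : IsIntegral ℂ (Ideal.Quotient.mk (Ideal.span {ι f, ι (infl f)}) z) :=
      Algebra.IsIntegral.isIntegral _
    exact (h1.map T').isAlgebraic
  have hXalg : IsAlgebraic ℂ (PowerSeries.X : PowerSeries ℂ) := by
    by_cases hb : b = 0
    · have ha : a ≠ 0 := by
        rintro rfl; subst hb; exact hab rfl
      have := hint (MvPowerSeries.C (-a⁻¹) * MvPowerSeries.X 1)
      rw [map_mul, hX, hC] at this
      convert this using 1
      simp [← mul_assoc, ← map_mul, ha]
    · have := hint (MvPowerSeries.C (b⁻¹) * MvPowerSeries.X 0)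
      rw [map_mul, hX, hC] at this
      convert this using 1
      simp [← mul_assoc, ← map_mul, hb]
  obtain ⟨q, hq, hq0⟩ := hXalg
  apply hq
  have : Polynomial.aeval (PowerSeries.X : PowerSeries ℂ) q = (q : PowerSeries ℂ) := by
    have : (Polynomial.aeval (PowerSeries.X : PowerSeries ℂ) :
        Polynomial ℂ →ₐ[ℂ] PowerSeries ℂ).toRingHom = Polynomial.coeToPowerSeries.ringHom := by
      ext1
      · ext1 a; simp
      · simp
    exact RingHom.congr_fun this q
  rw [this] at hq0
  simpa using hq0

theorem aux_forward (f : MvPolynomial (Fin 2) ℂ) (hf : Squarefree f)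
    (hno : ∀ a b : ℂ, (a, b) ≠ (0, 0) → ¬ (C a * X 0 + C b * X 1) ∣ f) :
    FiniteDimensional ℂ (MvPowerSeries (Fin 2) ℂ ⧸ Ideal.span {ι f, ι (infl f)}) := by
  classical
  let _ : NormalizedGCDMonoid (MvPolynomial (Fin 2) ℂ) := Classical.choice (by infer_instance)
  have hf0 : f ≠ 0 := hf.ne_zero
  obtain ⟨F, G, hrel, hF, hG⟩ : ∃ F G : MvPolynomial (Fin 2) ℂ, IsRelPrime F G ∧
      f = gcd f (infl f) * F ∧ infl f = gcd f (infl f) * G := by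
    obtain ⟨F, G, hF, hG, hu⟩ := extract_gcd f (infl f)
    exact ⟨F, G, gcd_isUnit_iff_isRelPrime.1 hu, hF, hG⟩
  set h := gcd f (infl f) with hh
  have hh0 : h ≠ 0 := by rintro h0; rw [h0, zero_mul] at hF; exact hf0 hF
  have hirr : ∀ p, Irreducible p → p ∣ h → constantCoeff p ≠ 0 := by
    intro p hp hph hp0
    have hpf : p ∣ f := hph.trans (gcd_dvd_left _ _)
    have hpi : p ∣ infl f := hph.trans (gcd_dvd_right _ _)
    obtain ⟨g, hg⟩ := hpf
    have hpg : ¬ p ∣ g := by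
      intro hpg
      apply hp.not_isUnit
      apply hf p
      rw [hg]
      exact mul_dvd_mul_left p hpg
    have h1 := aux_infl_mul p g
    rw [← hg] at h1
    have h2 : p ∣ g ^ 3 * infl p := by
      have := dvd_sub hpi h1
      simpa using this
    have h3 : p ∣ infl p := by
      rcases hp.prime.dvd_or_dvd h2 with h4 | h4
      · exact absurd (hp.prime.dvd_of_dvd_pow h4) hpg
      · exact h4
    obtain ⟨a, b, hab, hd⟩ := aux_irr p hp hp0 h3
    exact hno a b hab (hd.trans ⟨g, hg⟩)
  have hconst : constantCoeff h ≠ 0 := by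
    clear_value h
    clear hF hG hh
    induction h using WfDvdMonoid.induction_on_irreducible with
    | zero => exact absurd rfl hh0
    | unit u hu => exact (hu.map constantCoeff).ne_zero
    | mul a i ha hi ih =>
      rw [map_mul]
      refine mul_ne_zero (hirr i hi (dvd_mul_right _ _)) (ih ha ?_)
      intro p hp hpa
      exact hirr p hp (hpa.mul_left _)
  have hunit : IsUnit (ι h) := by
    rw [MvPowerSeries.isUnit_iff_constantCoeff]
    apply IsUnit.mk0
    convert hconst using 1
    rw [← MvPowerSeries.coeff_zero_eq_constantCoeff_apply]
    exact MvPolynomial.coeff_coe h 0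
  have hF' : ι f = ι h * ι F := by rw [← map_mul, ← hF]
  have hG' : ι (infl f) = ι h * ι G := by rw [← map_mul, ← hG]
  apply aux_finite F G hrel
  · rw [← Ideal.unit_mul_mem_iff_mem _ hunit, ← hF']
    exact Ideal.subset_span (by simp)
  · rw [← Ideal.unit_mul_mem_iff_mem _ hunit, ← hG']
    exact Ideal.subset_span (by simp)

/-- **Theorem 3.2(7), inflection part.** For a squarefree `f`, the number of
inflections `I_f` concentrated at the origin is infinite if and only if the germ of
`f = 0` at the origin contains the germ of a line, i.e. some linear polynomial
`a·X + b·Y` with `(a,b) ≠ (0,0)` divides `f`. -/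
theorem inflection_number_infinite_iff_line_component
    (f : MvPolynomial (Fin 2) ℂ) (hf : Squarefree f) :
    ¬ FiniteDimensional ℂ
        (MvPowerSeries (Fin 2) ℂ ⧸ Ideal.span {ι f, ι (infl f)}) ↔
      ∃ a b : ℂ, (a, b) ≠ (0, 0) ∧
        (MvPolynomial.C a * MvPolynomial.X 0 + MvPolynomial.C b * MvPolynomial.X 1) ∣ f := by

  constructor
  · intro h
    by_contra hno
    push Not at hno
    exact h (aux_forward f hf hno)
  · rintro ⟨a, b, hab, hd⟩
    exact aux_backward f a b hab hd
end
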